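/- arXiv:0806.0901 — 3 statements merged into one kernel-verified Lean document; each statement's English description precedes it below -/
import Mathlib

section
/- For 0 ≤ i ≤ d, the restriction of E_i to W_{d−i} is a bijection W_{d−i} → V_i, the restriction of G_{d−i} to V_i is a bijection V_i → W_{d−i}, and these two maps are mutually inverse. -/
/-!
Write `F k = V_0 + ⋯ + V_k` and `F* k = V*_0 + ⋯ + V*_k`. The key fact is that `F* j ∩ F k = 0`
when `j + k = d - 1` (`inf_eq_bot`): the sum over all such `j`, `k` of these intersections is
invariant under `A` and `A*`, because `A - θ_k` lowers `F k` and `A` raises `F*` by one step, and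
symmetrically for `A*`; it lies in `F (d - 1) ≠ V`, so it vanishes by irreducibility.

Hence `F k = W_{d-k} + ⋯ + W_d`: splitting a vector of `F k` along the `W_j`, its part in
`W_0 + ⋯ + W_{d-k-1}` lies in `F* (d-k-1) ∩ F k = 0`. The decompositions `(V_j)` and `(W_{d-j})`
therefore induce the same flag `F`, and `E_i`, `G_{d-i}` both act as the identity on `F i` modulo
`F (i - 1)` and both vanish on `F (i - 1)`. This makes them mutually inverse between `V_i` and
`W_{d-i}`.
-/

section SplitFlag

variable {𝕂 : Type*} [Field 𝕂] {V : Type*} [AddCommGroup V] [Module 𝕂 V]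

/-- The partial sum `U_0 + ⋯ + U_k` of a family of subspaces indexed by `ℤ`; it is `0` for
`k < 0`. -/
def partialSum (U : ℤ → Submodule 𝕂 V) (k : ℤ) : Submodule 𝕂 V :=
  ⨆ j ∈ Finset.Icc (0 : ℤ) k, U j

lemma partialSum_le {U : ℤ → Submodule 𝕂 V} {k : ℤ} {S : Submodule 𝕂 V}
    (h : ∀ j, 0 ≤ j → j ≤ k → U j ≤ S) : partialSum U k ≤ S :=
  iSup₂_le fun j hj => h j (Finset.mem_Icc.1 hj).1 (Finset.mem_Icc.1 hj).2

lemma le_partialSum {U : ℤ → Submodule 𝕂 V} (h0 : ∀ i, i < 0 → U i = ⊥) {j k : ℤ} (hjk : j ≤ k) :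
    U j ≤ partialSum U k := by
  rcases lt_or_ge j 0 with hj | hj
  · simp [h0 j hj]
  · exact le_iSup₂_of_le (f := fun j (_ : j ∈ Finset.Icc (0 : ℤ) k) => U j) j
      (Finset.mem_Icc.2 ⟨hj, hjk⟩) le_rfl

lemma partialSum_mono {U : ℤ → Submodule 𝕂 V} (h0 : ∀ i, i < 0 → U i = ⊥) {j k : ℤ}
    (hjk : j ≤ k) : partialSum U j ≤ partialSum U k :=
  partialSum_le fun _ _ hi => le_partialSum h0 (hi.trans hjk)

lemma partialSum_neg {U : ℤ → Submodule 𝕂 V} {k : ℤ} (hk : k < 0) : partialSum U k = ⊥ :=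
  le_bot_iff.1 (partialSum_le fun j _ _ => by omega)

lemma map_partialSum_le {U : ℤ → Submodule 𝕂 V} (h0 : ∀ i, i < 0 → U i = ⊥) {T : Module.End 𝕂 V}
    (hT : ∀ i, Submodule.map T (U i) ≤ U (i - 1) ⊔ U i ⊔ U (i + 1)) (k : ℤ) :
    partialSum U k ≤ (partialSum U (k + 1)).comap T :=
  partialSum_le fun j _ _ => Submodule.map_le_iff_le_comap.1 <| (hT j).trans <|
    sup_le (sup_le (le_partialSum h0 (by omega)) (le_partialSum h0 (by omega)))
      (le_partialSum h0 (by omega))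

/-- If `T` acts on each `U_j` as the scalar `θ_j`, then `T - θ_k` maps `U_0 + ⋯ + U_k` into
`U_0 + ⋯ + U_{k-1}`. -/
lemma sub_smul_mem_partialSum {U : ℤ → Submodule 𝕂 V} (h0 : ∀ i, i < 0 → U i = ⊥)
    {T : Module.End 𝕂 V} {θ : ℤ → 𝕂} {k : ℤ}
    (hT : ∀ j, 0 ≤ j → j ≤ k → ∀ x ∈ U j, T x = θ j • x) {x : V} (hx : x ∈ partialSum U k) :
    T x - θ k • x ∈ partialSum U (k - 1) := by
  have : partialSum U k ≤ (partialSum U (k - 1)).comap (T - θ k • (1 : Module.End 𝕂 V)) := by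
    refine partialSum_le fun j hj hjk x hx => ?_
    have e : (T - θ k • (1 : Module.End 𝕂 V)) x = (θ j - θ k) • x := by
      simp [hT j hj hjk x hx, sub_smul]
    rw [Submodule.mem_comap, e]
    rcases hjk.lt_or_eq with h | rfl
    · exact Submodule.smul_mem _ _ (le_partialSum h0 (by omega) hx)
    · simp
  simpa using this hx

lemma apply_eq_zero_of_mem_partialSum {U : ℤ → Submodule 𝕂 V} {E : Module.End 𝕂 V} {k : ℤ}
    (hE : ∀ j, 0 ≤ j → j < k → ∀ x ∈ U j, E x = 0) {x : V} (hx : x ∈ partialSum U (k - 1)) :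
    E x = 0 := by
  have : partialSum U (k - 1) ≤ LinearMap.ker E :=
    partialSum_le fun j hj hjk x hx => hE j hj (by omega) x hx
  exact this hx

/-- The partial flags `U` and `U'` of a tridiagonal pair `A`, `A'` are in general position:
`(U'_0 + ⋯ + U'_j) ∩ (U_0 + ⋯ + U_{d-1-j}) = 0`. -/
lemma inf_eq_bot {U U' : ℤ → Submodule 𝕂 V} (h0 : ∀ i, i < 0 → U i = ⊥)
    (h0' : ∀ i, i < 0 → U' i = ⊥) {A A' : Module.End 𝕂 V} {d : ℤ} {θ θ' : ℤ → 𝕂}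
    (hA : ∀ j, 0 ≤ j → j ≤ d → ∀ x ∈ U j, A x = θ j • x)
    (hA' : ∀ j, 0 ≤ j → j ≤ d → ∀ x ∈ U' j, A' x = θ' j • x)
    (htd : ∀ i, Submodule.map A' (U i) ≤ U (i - 1) ⊔ U i ⊔ U (i + 1))
    (htd' : ∀ i, Submodule.map A (U' i) ≤ U' (i - 1) ⊔ U' i ⊔ U' (i + 1))
    (hirr : ∀ W : Submodule 𝕂 V, Submodule.map A W ≤ W → Submodule.map A' W ≤ W →
      W = ⊥ ∨ W = ⊤)
    (hne : partialSum U (d - 1) ≠ ⊤) (j : ℤ) :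
    partialSum U' j ⊓ partialSum U (d - 1 - j) = ⊥ := by
  set P : ℤ → Submodule 𝕂 V := fun j => partialSum U' j ⊓ partialSum U (d - 1 - j) with hP
  have key : (⨆ j, P j) = ⊥ := by
    -- Outside `0 ≤ j ≤ d - 1` the subspace `P j` is zero.
    have hout : ∀ j, j < 0 ∨ d - 1 < j → P j = ⊥ := by
      rintro j (h | h)
      · simp [hP, partialSum_neg h]
      · simp [hP, partialSum_neg (U := U) (show d - 1 - j < 0 by omega)]
    have hmem : ∀ i, P i ≤ ⨆ j, P j := le_iSup P
    refine (hirr _ ?_ ?_).resolve_right fun htop => hne ?_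
    · rw [Submodule.map_iSup]
      refine iSup_le fun i => ?_
      by_cases hi : i < 0 ∨ d - 1 < i
      · simp [hout i hi]
      rintro _ ⟨x, hx, rfl⟩
      have h1 : A x - θ (d - 1 - i) • x ∈ partialSum U (d - 1 - i - 1) :=
        sub_smul_mem_partialSum h0 (fun j hj hj' => hA j hj (by omega)) hx.2
      have h2 : A x - θ (d - 1 - i) • x ∈ partialSum U' (i + 1) :=
        sub_mem (map_partialSum_le h0' htd' i hx.1)
          (Submodule.smul_mem _ _ (partialSum_mono h0' (by omega) hx.1))
      have h3 : A x - θ (d - 1 - i) • x ∈ P (i + 1) :=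
        ⟨h2, by rwa [show d - 1 - (i + 1) = d - 1 - i - 1 by ring]⟩
      have := add_mem (hmem _ h3) (Submodule.smul_mem _ (θ (d - 1 - i)) (hmem _ hx))
      simpa using this
    · rw [Submodule.map_iSup]
      refine iSup_le fun i => ?_
      by_cases hi : i < 0 ∨ d - 1 < i
      · simp [hout i hi]
      rintro _ ⟨x, hx, rfl⟩
      have h1 : A' x - θ' i • x ∈ partialSum U' (i - 1) :=
        sub_smul_mem_partialSum h0' (fun j hj hj' => hA' j hj (by omega)) hx.1
      have h2 : A' x - θ' i • x ∈ partialSum U (d - 1 - i + 1) :=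
        sub_mem (map_partialSum_le h0 htd _ hx.2)
          (Submodule.smul_mem _ _ (partialSum_mono h0 (by omega) hx.2))
      have h3 : A' x - θ' i • x ∈ P (i - 1) :=
        ⟨h1, by rwa [show d - 1 - (i - 1) = d - 1 - i + 1 by ring]⟩
      have := add_mem (hmem _ h3) (Submodule.smul_mem _ (θ' i) (hmem _ hx))
      simpa using this
    · rw [← top_le_iff, ← htop]
      refine iSup_le fun i => ?_
      by_cases hi : i < 0 ∨ d - 1 < i
      · simp [hout i hi]
      · exact inf_le_right.trans (partialSum_mono h0 (by omega))
  exact le_bot_iff.1 (key ▸ le_iSup P j)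

end SplitFlag


theorem stmt_11
    {𝕂 : Type*} [Field 𝕂] [IsAlgClosed 𝕂]
    {V : Type*} [AddCommGroup V] [Module 𝕂 V] [FiniteDimensional 𝕂 V]
    (hV : 0 < Module.finrank 𝕂 V)
    {q : 𝕂} (hq0 : q ≠ 0) (hqru : ∀ n : ℕ, 0 < n → q ^ n ≠ 1)
    {c : 𝕂} (hc : c ≠ 0)
    (A Astar : Module.End 𝕂 V)
    (d : ℤ) (hd : 0 ≤ d)
    (Vs Vst : ℤ → Submodule 𝕂 V)
    (hVout : ∀ i : ℤ, i < 0 ∨ d < i → Vs i = ⊥)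
    (hVstout : ∀ i : ℤ, i < 0 ∨ d < i → Vst i = ⊥)
    (hVeig : ∀ i : ℤ, 0 ≤ i → i ≤ d → Vs i = Module.End.eigenspace A (q ^ (2*i - d)))
    (hVne : ∀ i : ℤ, 0 ≤ i → i ≤ d → Vs i ≠ ⊥)
    (hVtot : (⨆ i ∈ Finset.Icc (0:ℤ) d, Vs i) = ⊤)
    (hVsteig : ∀ i : ℤ, 0 ≤ i → i ≤ d →
      Vst i = Module.End.eigenspace Astar (q ^ (2*i - d) + c * q ^ (d - 2*i)))
    (hVstne : ∀ i : ℤ, 0 ≤ i → i ≤ d → Vst i ≠ ⊥)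
    (hVsttot : (⨆ i ∈ Finset.Icc (0:ℤ) d, Vst i) = ⊤)
    (htd1 : ∀ i : ℤ, Submodule.map Astar (Vs i) ≤ Vs (i-1) ⊔ Vs i ⊔ Vs (i+1))
    (htd2 : ∀ i : ℤ, Submodule.map A (Vst i) ≤ Vst (i-1) ⊔ Vst i ⊔ Vst (i+1))
    (hirr : ∀ W : Submodule 𝕂 V, Submodule.map A W ≤ W → Submodule.map Astar W ≤ W →
      W = ⊥ ∨ W = ⊤)
    (Ws : ℤ → Submodule 𝕂 V)
    (hWout : ∀ i : ℤ, i < 0 ∨ d < i → Ws i = ⊥)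
    (hWdef : ∀ i : ℤ, 0 ≤ i → i ≤ d →
      Ws i = (⨆ j ∈ Finset.Icc (0:ℤ) i, Vst j) ⊓ (⨆ j ∈ Finset.Icc (0:ℤ) (d - i), Vs j))
    (hWtot : (⨆ i ∈ Finset.Icc (0:ℤ) d, Ws i) = ⊤)
    (B : Module.End 𝕂 V)
    (hB : ∀ i : ℤ, 0 ≤ i → i ≤ d → ∀ v ∈ Ws i, B v = q ^ (2*i - d) • v)
    (Es : ℤ → Module.End 𝕂 V)
    (hEs : ∀ i : ℤ, 0 ≤ i → i ≤ d → (∀ v ∈ Vs i, Es i v = v) ∧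
      (∀ j : ℤ, 0 ≤ j → j ≤ d → j ≠ i → ∀ v ∈ Vs j, Es i v = 0))
    (Gs : ℤ → Module.End 𝕂 V)
    (hGs : ∀ i : ℤ, 0 ≤ i → i ≤ d → (∀ v ∈ Ws i, Gs i v = v) ∧
      (∀ j : ℤ, 0 ≤ j → j ≤ d → j ≠ i → ∀ v ∈ Ws j, Gs i v = 0))
    :
    ∀ i : ℤ, 0 ≤ i → i ≤ d →
      (∀ w ∈ Ws (d - i), Es i w ∈ Vs i) ∧
      (∀ v ∈ Vs i, Gs (d - i) v ∈ Ws (d - i)) ∧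
      (∀ w ∈ Ws (d - i), Gs (d - i) (Es i w) = w) ∧
      (∀ v ∈ Vs i, Es i (Gs (d - i) v) = v) := by
  have hV0 : ∀ i, i < 0 → Vs i = ⊥ := fun i hi => hVout i (Or.inl hi)
  have hVst0 : ∀ i, i < 0 → Vst i = ⊥ := fun i hi => hVstout i (Or.inl hi)
  have hA : ∀ j, 0 ≤ j → j ≤ d → ∀ x ∈ Vs j, A x = q ^ (2 * j - d) • x := by
    intro j hj hjd x hx
    rw [hVeig j hj hjd] at hx
    exact Module.End.mem_eigenspace_iff.1 hx
  have hA' : ∀ j, 0 ≤ j → j ≤ d → ∀ x ∈ Vst j,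
      Astar x = (q ^ (2 * j - d) + c * q ^ (d - 2 * j)) • x := by
    intro j hj hjd x hx
    rw [hVsteig j hj hjd] at hx
    exact Module.End.mem_eigenspace_iff.1 hx
  have hEF : ∀ i, 0 ≤ i → i ≤ d → ∀ x ∈ partialSum Vs (i - 1), Es i x = 0 :=
    fun i hi hid x hx => apply_eq_zero_of_mem_partialSum
      (fun j hj hji => (hEs i hi hid).2 j hj (by omega) hji.ne) hx
  have hne : partialSum Vs (d - 1) ≠ ⊤ := by
    intro htop
    refine hVne d hd le_rfl ((Submodule.eq_bot_iff _).2 fun x hx => ?_)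
    rw [← (hEs d hd le_rfl).1 x hx]
    exact hEF d hd le_rfl x (htop ▸ Submodule.mem_top)
  have hinf := inf_eq_bot (θ := fun j => q ^ (2 * j - d))
    (θ' := fun j => q ^ (2 * j - d) + c * q ^ (d - 2 * j))
    hV0 hVst0 hA hA' htd1 htd2 hirr hne
  have hWV : ∀ j, 0 ≤ j → j ≤ d → Ws j ≤ partialSum Vs (d - j) := fun j hj hjd => by
    rw [hWdef j hj hjd]; exact inf_le_right
  have hWVst : ∀ j, 0 ≤ j → j ≤ d → Ws j ≤ partialSum Vst j := fun j hj hjd => by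
    rw [hWdef j hj hjd]; exact inf_le_left
  -- The flag `F` is also the flag of the split decomposition, read from the top.
  have hF : ∀ k, k ≤ d → partialSum Vs k ≤ ⨆ j ∈ Finset.Icc (d - k) d, Ws j := by
    intro k hk v hv
    rcases lt_or_ge k 0 with hk0 | hk0
    · rw [partialSum_neg hk0] at hv
      rw [(Submodule.mem_bot 𝕂).1 hv]
      exact zero_mem _
    have hsup : (⊤ : Submodule 𝕂 V) ≤
        partialSum Vst (d - 1 - k) ⊔ ⨆ j ∈ Finset.Icc (d - k) d, Ws j := by
      rw [← hWtot]
      refine iSup₂_le fun j hj => ?_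
      obtain ⟨hj0, hjd⟩ := Finset.mem_Icc.1 hj
      rcases lt_or_ge j (d - k) with h | h
      · exact ((hWVst j hj0 hjd).trans (partialSum_mono hVst0 (by omega))).trans le_sup_left
      · exact le_sup_of_le_right (le_iSup₂_of_le
          (f := fun j (_ : j ∈ Finset.Icc (d - k) d) => Ws j) j (Finset.mem_Icc.2 ⟨h, hjd⟩) le_rfl)
    obtain ⟨a, ha, b, hb, rfl⟩ := Submodule.mem_sup.1 (hsup (Submodule.mem_top (x := v)))
    have hbF : b ∈ partialSum Vs k := by
      refine (iSup₂_le fun j hj => ?_ :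
        (⨆ j ∈ Finset.Icc (d - k) d, Ws j) ≤ partialSum Vs k) hb
      obtain ⟨hj0, hjd⟩ := Finset.mem_Icc.1 hj
      exact (hWV j (by omega) hjd).trans (partialSum_mono hV0 (by omega))
    have haF : a ∈ partialSum Vs k := by simpa using sub_mem hv hbF
    have ha0 : a ∈ partialSum Vst (d - 1 - k) ⊓ partialSum Vs (d - 1 - (d - 1 - k)) :=
      ⟨ha, by rwa [show d - 1 - (d - 1 - k) = k by ring]⟩
    rw [hinf, Submodule.mem_bot] at ha0
    simpa [ha0] using hb
  intro i hi hid
  obtain ⟨hG1, hG2⟩ := hGs (d - i) (by omega) (by omega)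
  obtain ⟨hE1, hE2⟩ := hEs i hi hid
  have hGF : ∀ x ∈ partialSum Vs (i - 1), Gs (d - i) x = 0 := by
    intro x hx
    refine ((iSup₂_le fun j hj => ?_ :
      (⨆ j ∈ Finset.Icc (d - (i - 1)) d, Ws j) ≤ LinearMap.ker (Gs (d - i)))) (hF _ (by omega) hx)
    obtain ⟨hj0, hjd⟩ := Finset.mem_Icc.1 hj
    exact fun y hy => hG2 j (by omega) hjd (by omega) y hy
  have hEmem : ∀ x, Es i x ∈ Vs i := by
    intro x
    refine ((iSup₂_le fun j hj => ?_ : (⨆ j ∈ Finset.Icc (0 : ℤ) d, Vs j) ≤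
      (Vs i).comap (Es i))) (hVtot ▸ Submodule.mem_top)
    obtain ⟨hj0, hjd⟩ := Finset.mem_Icc.1 hj
    intro y hy
    rw [Submodule.mem_comap]
    by_cases h : j = i
    · subst h; rwa [hE1 y hy]
    · rw [hE2 j hj0 hjd h y hy]; exact zero_mem _
  have hGmem : ∀ x, Gs (d - i) x ∈ Ws (d - i) := by
    intro x
    refine ((iSup₂_le fun j hj => ?_ : (⨆ j ∈ Finset.Icc (0 : ℤ) d, Ws j) ≤
      (Ws (d - i)).comap (Gs (d - i)))) (hWtot ▸ Submodule.mem_top)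
    obtain ⟨hj0, hjd⟩ := Finset.mem_Icc.1 hj
    intro y hy
    rw [Submodule.mem_comap]
    by_cases h : j = d - i
    · subst h; rwa [hG1 y hy]
    · rw [hG2 j hj0 hjd h y hy]; exact zero_mem _
  -- On `F i`, both projections are the identity modulo `F (i - 1)`.
  have hEsub : ∀ x ∈ partialSum Vs i, Es i x - x ∈ partialSum Vs (i - 1) := by
    intro x hx
    refine (partialSum_le fun j hj hji y hy => ?_ :
      partialSum Vs i ≤ (partialSum Vs (i - 1)).comap (Es i - 1)) hx
    rw [Submodule.mem_comap, LinearMap.sub_apply, Module.End.one_apply]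
    by_cases h : j = i
    · subst h; rw [hE1 y hy, sub_self]; exact zero_mem _
    · rw [hE2 j hj (by omega) h y hy, zero_sub]
      exact neg_mem (le_partialSum hV0 (by omega) hy)
  have hGsub : ∀ x ∈ partialSum Vs i, Gs (d - i) x - x ∈ partialSum Vs (i - 1) := by
    intro x hx
    refine ((iSup₂_le fun j hj => ?_ : (⨆ j ∈ Finset.Icc (d - i) d, Ws j) ≤
      (partialSum Vs (i - 1)).comap (Gs (d - i) - 1))) (hF i hid hx)
    obtain ⟨hj0, hjd⟩ := Finset.mem_Icc.1 hj
    intro y hy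
    rw [Submodule.mem_comap, LinearMap.sub_apply, Module.End.one_apply]
    by_cases h : j = d - i
    · subst h; rw [hG1 y hy, sub_self]; exact zero_mem _
    · rw [hG2 j (by omega) hjd h y hy, zero_sub]
      exact neg_mem (partialSum_mono hV0 (by omega) (hWV j (by omega) hjd hy))
  refine ⟨fun w _ => hEmem w, fun v _ => hGmem v, fun w hw => ?_, fun v hv => ?_⟩
  · have hwF : w ∈ partialSum Vs i := by
      simpa using hWV (d - i) (by omega) (by omega) hw
    have := hGF _ (hEsub w hwF)
    rwa [map_sub, hG1 w hw, sub_eq_zero] at this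
  · have := hEF i hi hid _ (hGsub v (le_partialSum hV0 le_rfl hv))
    rwa [map_sub, hE1 v hv, sub_eq_zero] at this
end

section
/- For every integer i ≥ 0: (A* − B − cK⁻¹)^i = Σ_{j=0}^{i} (−1)ʲ q^{j−ji} [i choose j]_q (A* − K − cK⁻¹)^{i−j} (B − K)ʲ, where [i choose j]_q = [i]!/([j]!·[i−j]!). -/
/-!
Put `Y = B - K` and `Z = A* - B - c K⁻¹`, so that `Z + Y = A* - K - c K⁻¹`. The theorem is the
normally ordered expansion of `Z ^ i` in `Z + Y` and `Y`, and it follows from `Y Z = q⁻² Z Y`: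
this relation gives `Z ^ (i+1) = (Z + Y) Z ^ i - q ^ (-2i) Z ^ i Y`, a Pascal-type recursion whose
solution is the signed `q`-binomial coefficient (`pow_expand`, `pasc_mul`).

The relation `Y Z = q⁻² Z Y` is a linear consequence of three others:

* `K A* - q⁻² A* K = (1 - q⁻²)(K² + c)`, i.e. `A* - K - c K⁻¹` lowers the decomposition `U`;
* `B A* - q⁻² A* B = (1 - q⁻²)(B² + c)`, the same statement for `B` and the decomposition `W`;
* `K B - q⁻² B K = (1 - q⁻²) K²`, i.e. `B - K` lowers `U`, together with its conjugate by `K⁻¹`.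

The first two come from the way `A*` acts on the flags defining `U` and `W`. For the third, `A - B⁻¹`
raises `W`, so `B A - q² A B = 1 - q²`; hence `B` maps `V_j` into `V_{j-1} + V_j` and therefore
`V_i + ⋯ + V_d` into `V_{i-1} + ⋯ + V_d`. Moreover `B - q ^ (2i-d)` maps
`V*_0 + ⋯ + V*_i = W_0 + ⋯ + W_i` into `V*_0 + ⋯ + V*_{i-1}`. Intersecting the two flags gives
`(B - K) U_i ⊆ U_{i-1}`.

The equality `V*_0 + ⋯ + V*_i = W_0 + ⋯ + W_i` needs the eigenvalues `θ*_i` to be distinct. If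
`θ*_i = θ*_j` with `i < j`, then `V*_0 + ⋯ + V*_j = V*_0 + ⋯ + V*_{j-1}`, so `U_j ⊆ U_{j-1}` and
`U_j = 0`, since `K` has different eigenvalues on the two. But `A` acts triangularly on `U` with
diagonal entries `θ_0, …, θ_d`, which are distinct, so `U_j = 0` would force `V_j = 0`.
-/

noncomputable def qfac (𝕂 : Type*) [Field 𝕂] (q : 𝕂) : ℕ → 𝕂
  | 0 => 1
  | n + 1 => ((q ^ (n + 1) - q⁻¹ ^ (n + 1)) / (q - q⁻¹)) * qfac 𝕂 q n

/-! ### The normal-ordered q-binomial expansion -/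

/-- The coefficient of `X ^ (n - j) * Y ^ j` in the normally ordered expansion of
`∏ k < n, (X - q ^ (-2k) Y)`, given by its Pascal-type recursion. It vanishes for `j > n`. -/
def pasc {𝕂 : Type*} [Field 𝕂] (q : 𝕂) : ℕ → ℕ → 𝕂
  | _, 0 => 1
  | 0, _ + 1 => 0
  | n + 1, j + 1 => pasc q n (j + 1) - (q⁻¹ ^ 2) ^ n * pasc q n j

lemma pasc_zero {𝕂 : Type*} [Field 𝕂] (q : 𝕂) (n : ℕ) : pasc q n 0 = 1 := by
  cases n <;> rfl

lemma pasc_eq_zero {𝕂 : Type*} [Field 𝕂] (q : 𝕂) (n j : ℕ) (h : n < j) : pasc q n j = 0 := by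
  induction n generalizing j with
  | zero => obtain ⟨k, rfl⟩ : ∃ k, j = k + 1 := ⟨j - 1, by omega⟩; rfl
  | succ n ih =>
    obtain ⟨k, rfl⟩ : ∃ k, j = k + 1 := ⟨j - 1, by omega⟩
    rw [pasc, ih _ (by omega), ih _ (by omega)]; simp

lemma pow_sub_inv_pow_ne_zero {𝕂 : Type*} [Field 𝕂] {q : 𝕂} (hq0 : q ≠ 0)
    (hq : ∀ n : ℕ, 0 < n → q ^ n ≠ 1) (n : ℕ) (hn : 0 < n) : q ^ n - q⁻¹ ^ n ≠ 0 := by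
  intro h
  apply hq (2 * n) (by omega)
  rw [two_mul, pow_add]
  nth_rewrite 1 [sub_eq_zero.mp h]
  rw [← mul_pow, inv_mul_cancel₀ hq0, one_pow]

lemma qfac_ne_zero {𝕂 : Type*} [Field 𝕂] {q : 𝕂} (hq0 : q ≠ 0)
    (hq : ∀ n : ℕ, 0 < n → q ^ n ≠ 1) (n : ℕ) : qfac 𝕂 q n ≠ 0 := by
  induction n with
  | zero => simp [qfac]
  | succ n ih =>
    have h1 := pow_sub_inv_pow_ne_zero hq0 hq 1 one_pos
    rw [pow_one, pow_one] at h1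
    exact mul_ne_zero (div_ne_zero (pow_sub_inv_pow_ne_zero hq0 hq _ n.succ_pos) h1) ih

/-- The closed form of the Pascal-type coefficients, with denominators cleared and the indices
`n - j = a`, `j = b` separated so that no truncated subtraction occurs. -/
lemma pasc_mul {𝕂 : Type*} [Field 𝕂] {q : 𝕂} (hq0 : q ≠ 0)
    (hq : ∀ n : ℕ, 0 < n → q ^ n ≠ 1) (n a b : ℕ) (hn : a + b = n) :
    pasc q n b * (qfac 𝕂 q a * qfac 𝕂 q b) =
      (-1) ^ b * (q * q⁻¹ ^ n) ^ b * qfac 𝕂 q n := by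
  induction n generalizing a b with
  | zero =>
    obtain ⟨rfl, rfl⟩ : a = 0 ∧ b = 0 := by omega
    simp [pasc, qfac]
  | succ n ih =>
    have h1 := pow_sub_inv_pow_ne_zero hq0 hq 1 one_pos
    rw [pow_one, pow_one] at h1
    have hqp : q * q⁻¹ = 1 := mul_inv_cancel₀ hq0
    rcases b with _ | b
    · obtain rfl : a = n + 1 := by omega
      simp [pasc, qfac]
    rcases a with _ | a
    · obtain rfl : b = n := by omega
      have := ih 0 b (by omega)
      rw [pasc, pasc_eq_zero _ _ _ (Nat.lt_succ_self b)]
      simp only [qfac, one_mul] at this ⊢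
      calc _ = -(q⁻¹ ^ 2) ^ b * ((q ^ (b + 1) - q⁻¹ ^ (b + 1)) / (q - q⁻¹)) *
            (pasc q b b * qfac 𝕂 q b) := by ring
        _ = _ := by
          rw [this]
          have : (q * q⁻¹ ^ (b + 1)) ^ (b + 1) = (q * q⁻¹ ^ b) ^ b * (q⁻¹ ^ 2) ^ b := by
            linear_combination (q ^ b * q⁻¹ ^ (b * 2) * q⁻¹ ^ (b ^ 2)) * hqp
          rw [this]; ring
    · have e1 := ih a (b + 1) (by omega)
      have e2 := ih (a + 1) b (by omega)
      obtain rfl : n = a + b + 1 := by omega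
      rw [pasc]
      have s1 : ∀ m, qfac 𝕂 q (m + 1) =
        ((q ^ (m + 1) - q⁻¹ ^ (m + 1)) / (q - q⁻¹)) * qfac 𝕂 q m := fun _ => rfl
      calc _ = ((q ^ (a + 1) - q⁻¹ ^ (a + 1)) / (q - q⁻¹)) *
              (pasc q (a + b + 1) (b + 1) * (qfac 𝕂 q a * qfac 𝕂 q (b + 1)))
            - (q⁻¹ ^ 2) ^ (a + b + 1) * ((q ^ (b + 1) - q⁻¹ ^ (b + 1)) / (q - q⁻¹)) *
              (pasc q (a + b + 1) b * (qfac 𝕂 q (a + 1) * qfac 𝕂 q b)) := by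
            rw [s1 a, s1 b]; ring
        _ = _ := by
          rw [e1, e2, s1 (a + b + 1)]
          have t1 : (q * q⁻¹ ^ (a + b + 1 + 1)) ^ (b + 1) =
              (q * q⁻¹ ^ (a + b + 1)) ^ b * (q⁻¹ ^ (a + b + 1) * q⁻¹ ^ b) := by
            linear_combination (q ^ b * q⁻¹ * q⁻¹ ^ a * q⁻¹ ^ (a * b) * q⁻¹ ^ (b * 3) *
              q⁻¹ ^ (b ^ 2)) * hqp
          have t2 : (q * q⁻¹ ^ (a + b + 1)) ^ (b + 1) =
              (q * q⁻¹ ^ (a + b + 1)) ^ b * (q * q⁻¹ ^ (a + b + 1)) := by ring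
          rw [t1, t2]
          generalize (q * q⁻¹ ^ (a + b + 1)) ^ b = z
          generalize q - q⁻¹ = D at h1
          generalize qfac 𝕂 q (a + b + 1) = Q
          have hx : q ^ a ≠ 0 := pow_ne_zero a hq0
          have hy : q ^ b ≠ 0 := pow_ne_zero b hq0
          have hsq : (q⁻¹ ^ 2) ^ (a + b + 1) = (q⁻¹ ^ (a + b + 1)) ^ 2 := by ring
          rw [hsq]
          simp only [pow_succ (-1 : 𝕂), inv_pow, pow_add, pow_one]
          generalize q ^ a = x at hx
          generalize q ^ b = y at hy
          generalize (-1 : 𝕂) ^ b = e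
          field_simp
          ring

/-- If `Y Z = q⁻² Z Y`, powers of `Z` expand in normally ordered monomials in `Z + Y` and `Y`. -/
lemma pow_expand {𝕂 R : Type*} [Field 𝕂] [Ring R] [Algebra 𝕂 R] (q : 𝕂) (Y Z : R)
    (h : Y * Z = (q⁻¹ ^ 2) • (Z * Y)) (n : ℕ) :
    Z ^ n = ∑ j ∈ Finset.range (n + 1), pasc q n j • ((Z + Y) ^ (n - j) * Y ^ j) := by
  have hc : ∀ n, Y * Z ^ n = (q⁻¹ ^ 2) ^ n • (Z ^ n * Y) := by
    intro n
    induction n with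
    | zero => simp
    | succ n ih =>
      rw [pow_succ Z, ← mul_assoc, ih, smul_mul_assoc, mul_assoc, h, mul_smul_comm, smul_smul,
        ← pow_succ, mul_assoc]
  induction n with
  | zero => simp [pasc]
  | succ n ih =>
    have hz : Z ^ (n + 1) = (Z + Y) * Z ^ n - (q⁻¹ ^ 2) ^ n • (Z ^ n * Y) := by
      rw [← hc, pow_succ', add_mul, add_sub_cancel_right]
    have h1 : (Z + Y) * Z ^ n =
        (Z + Y) ^ (n + 1) + ∑ j ∈ Finset.range (n + 1),
          pasc q n (j + 1) • ((Z + Y) ^ (n - j) * Y ^ (j + 1)) := by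
      rw [Finset.sum_range_succ, pasc_eq_zero q n (n + 1) (Nat.lt_succ_self n), zero_smul, add_zero]
      rw [ih, Finset.sum_range_succ', mul_add, Finset.mul_sum, add_comm]
      congr 1
      · simp [pasc_zero, pow_succ']
      · refine Finset.sum_congr rfl fun j hj => ?_
        have : n - j = n - (j + 1) + 1 := by have := Finset.mem_range.mp hj; omega
        rw [this, mul_smul_comm, pow_succ' (Z + Y), mul_assoc]
    have h2 : Z ^ n * Y = ∑ j ∈ Finset.range (n + 1),
        pasc q n j • ((Z + Y) ^ (n - j) * Y ^ (j + 1)) := by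
      rw [ih, Finset.sum_mul]
      refine Finset.sum_congr rfl fun j _ => ?_
      rw [smul_mul_assoc, mul_assoc, pow_succ]
    rw [hz, h1, h2, Finset.sum_range_succ' _ (n + 1), Finset.smul_sum, add_sub_assoc,
      ← Finset.sum_sub_distrib, add_comm]
    congr 1
    · refine Finset.sum_congr rfl fun j _ => ?_
      rw [pasc, Nat.add_sub_add_right, sub_smul, smul_smul]
    · simp [pasc_zero]

/-! ### Linear maps acting on sums of subspaces -/

lemma apply_mem_of_mem_iSup {𝕂 V : Type*} [Field 𝕂] [AddCommGroup V] [Module 𝕂 V]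
    {P : ℤ → Submodule 𝕂 V} {a b : ℤ} {Q : Submodule 𝕂 V} (T : Module.End 𝕂 V)
    (h : ∀ j, a ≤ j → j ≤ b → ∀ x ∈ P j, T x ∈ Q) {x : V}
    (hx : x ∈ ⨆ j ∈ Finset.Icc a b, P j) : T x ∈ Q := by
  have : (⨆ j ∈ Finset.Icc a b, P j) ≤ Q.comap T :=
    iSup₂_le fun j hj y hy => h j (Finset.mem_Icc.mp hj).1 (Finset.mem_Icc.mp hj).2 y hy
  exact this hx

lemma mem_iSup_Icc {𝕂 V : Type*} [Field 𝕂] [AddCommGroup V] [Module 𝕂 V]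
    {P : ℤ → Submodule 𝕂 V} {a b j : ℤ} (h1 : a ≤ j) (h2 : j ≤ b) {x : V} (hx : x ∈ P j) :
    x ∈ ⨆ j ∈ Finset.Icc a b, P j :=
  (le_iSup₂_of_le (f := fun j (_ : j ∈ Finset.Icc a b) => P j) j
    (Finset.mem_Icc.mpr ⟨h1, h2⟩) le_rfl) hx

lemma iSup_Icc_le {𝕂 V : Type*} [Field 𝕂] [AddCommGroup V] [Module 𝕂 V]
    {P : ℤ → Submodule 𝕂 V} {a b : ℤ} {Q : Submodule 𝕂 V}
    (h : ∀ j, a ≤ j → j ≤ b → P j ≤ Q) : (⨆ j ∈ Finset.Icc a b, P j) ≤ Q :=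
  iSup₂_le fun j hj => h j (Finset.mem_Icc.mp hj).1 (Finset.mem_Icc.mp hj).2

/-- Linear maps agreeing on subspaces that span `V` are equal. -/
lemma end_ext {𝕂 V : Type*} [Field 𝕂] [AddCommGroup V] [Module 𝕂 V]
    {P : ℤ → Submodule 𝕂 V} {a b : ℤ} (hP : (⨆ j ∈ Finset.Icc a b, P j) = ⊤)
    {S T : Module.End 𝕂 V} (h : ∀ j, ∀ x ∈ P j, S x = T x) : S = T := by
  ext x
  have : (S - T) x ∈ (⊥ : Submodule 𝕂 V) :=
    apply_mem_of_mem_iSup (S - T) (fun j _ _ y hy => by simp [h j y hy])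
      (hP ▸ Submodule.mem_top : x ∈ ⨆ j ∈ Finset.Icc a b, P j)
  simpa [sub_eq_zero] using this

lemma mem_sup_three {𝕂 V : Type*} [Field 𝕂] [AddCommGroup V] [Module 𝕂 V]
    {P : ℤ → Submodule 𝕂 V} {T : Module.End 𝕂 V}
    (h : ∀ i : ℤ, Submodule.map T (P i) ≤ P (i-1) ⊔ P i ⊔ P (i+1)) {i : ℤ} {Q : Submodule 𝕂 V}
    (h1 : P (i - 1) ≤ Q) (h2 : P i ≤ Q) (h3 : P (i + 1) ≤ Q) {x : V} (hx : x ∈ P i) : T x ∈ Q :=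
  (sup_le (sup_le h1 h2) h3) (h i ⟨x, hx, rfl⟩)

/-! ### The split decompositions and the commutation relations -/

theorem stmt_12
    {𝕂 : Type*} [Field 𝕂] [IsAlgClosed 𝕂]
    {V : Type*} [AddCommGroup V] [Module 𝕂 V] [FiniteDimensional 𝕂 V]
    (hV : 0 < Module.finrank 𝕂 V)
    {q : 𝕂} (hq0 : q ≠ 0) (hqru : ∀ n : ℕ, 0 < n → q ^ n ≠ 1)
    {c : 𝕂} (hc : c ≠ 0)
    (A Astar : Module.End 𝕂 V)
    (d : ℤ) (hd : 0 ≤ d)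
    (Vs Vst : ℤ → Submodule 𝕂 V)
    (hVout : ∀ i : ℤ, i < 0 ∨ d < i → Vs i = ⊥)
    (hVstout : ∀ i : ℤ, i < 0 ∨ d < i → Vst i = ⊥)
    (hVeig : ∀ i : ℤ, 0 ≤ i → i ≤ d → Vs i = Module.End.eigenspace A (q ^ (2*i - d)))
    (hVne : ∀ i : ℤ, 0 ≤ i → i ≤ d → Vs i ≠ ⊥)
    (hVtot : (⨆ i ∈ Finset.Icc (0:ℤ) d, Vs i) = ⊤)
    (hVsteig : ∀ i : ℤ, 0 ≤ i → i ≤ d →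
      Vst i = Module.End.eigenspace Astar (q ^ (2*i - d) + c * q ^ (d - 2*i)))
    (hVstne : ∀ i : ℤ, 0 ≤ i → i ≤ d → Vst i ≠ ⊥)
    (hVsttot : (⨆ i ∈ Finset.Icc (0:ℤ) d, Vst i) = ⊤)
    (htd1 : ∀ i : ℤ, Submodule.map Astar (Vs i) ≤ Vs (i-1) ⊔ Vs i ⊔ Vs (i+1))
    (htd2 : ∀ i : ℤ, Submodule.map A (Vst i) ≤ Vst (i-1) ⊔ Vst i ⊔ Vst (i+1))
    (hirr : ∀ W : Submodule 𝕂 V, Submodule.map A W ≤ W → Submodule.map Astar W ≤ W →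
      W = ⊥ ∨ W = ⊤)
    (Us : ℤ → Submodule 𝕂 V)
    (hUout : ∀ i : ℤ, i < 0 ∨ d < i → Us i = ⊥)
    (hUdef : ∀ i : ℤ, 0 ≤ i → i ≤ d →
      Us i = (⨆ j ∈ Finset.Icc (0:ℤ) i, Vst j) ⊓ (⨆ j ∈ Finset.Icc i d, Vs j))
    (hUtot : (⨆ i ∈ Finset.Icc (0:ℤ) d, Us i) = ⊤)
    (K Kinv : Module.End 𝕂 V)
    (hK : ∀ i : ℤ, 0 ≤ i → i ≤ d → ∀ v ∈ Us i, K v = q ^ (2*i - d) • v)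
    (hKinv : ∀ i : ℤ, 0 ≤ i → i ≤ d → ∀ v ∈ Us i, Kinv v = q ^ (d - 2*i) • v)
    (hKKinv : K * Kinv = 1) (hKinvK : Kinv * K = 1)
    (Ws : ℤ → Submodule 𝕂 V)
    (hWout : ∀ i : ℤ, i < 0 ∨ d < i → Ws i = ⊥)
    (hWdef : ∀ i : ℤ, 0 ≤ i → i ≤ d →
      Ws i = (⨆ j ∈ Finset.Icc (0:ℤ) i, Vst j) ⊓ (⨆ j ∈ Finset.Icc (0:ℤ) (d - i), Vs j))
    (hWtot : (⨆ i ∈ Finset.Icc (0:ℤ) d, Ws i) = ⊤)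
    (B : Module.End 𝕂 V)
    (hB : ∀ i : ℤ, 0 ≤ i → i ≤ d → ∀ v ∈ Ws i, B v = q ^ (2*i - d) • v)
    :
    ∀ i : ℕ, (Astar - B - c • Kinv) ^ i =
      ∑ j ∈ Finset.range (i + 1),
        ((-1 : 𝕂) ^ j * q ^ ((j:ℤ) - (j:ℤ) * (i:ℤ)) *
            (qfac 𝕂 q i / (qfac 𝕂 q j * qfac 𝕂 q (i - j)))) •
          ((Astar - K - c • Kinv) ^ (i - j) * (B - K) ^ j) := by
  -- `F`, `R`, `L` are the three flags whose intersections are the two split decompositions.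
  set F : ℤ → Submodule 𝕂 V := fun i => ⨆ j ∈ Finset.Icc (0:ℤ) i, Vst j with hF
  set R : ℤ → Submodule 𝕂 V := fun i => ⨆ j ∈ Finset.Icc i d, Vs j with hR
  set L : ℤ → Submodule 𝕂 V := fun i => ⨆ j ∈ Finset.Icc (0:ℤ) (d - i), Vs j with hL
  have hq2 : q ^ 2 ≠ 0 := pow_ne_zero 2 hq0
  have up : ∀ i : ℤ, q ^ (2 * (i + 1) - d) = q ^ 2 * q ^ (2 * i - d) := fun i => by
    rw [← zpow_natCast, ← zpow_add₀ hq0]; congr 1; push_cast; ring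
  have down : ∀ i : ℤ, q ^ (2 * (i - 1) - d) = (q ^ 2)⁻¹ * q ^ (2 * i - d) := fun i => by
    have := up (i - 1)
    rw [sub_add_cancel] at this
    rw [this, inv_mul_cancel_left₀ hq2]
  have flip : ∀ i : ℤ, q ^ (d - 2 * i) = (q ^ (2 * i - d))⁻¹ := fun i => by
    rw [← zpow_neg]; congr 1; ring
  have tne : ∀ i : ℤ, q ^ (2 * i - d) ≠ 0 := fun i => zpow_ne_zero _ hq0
  have tinj : ∀ i j : ℤ, i ≠ j → q ^ (2 * i - d) ≠ q ^ (2 * j - d) := by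
    have aux : ∀ i j : ℤ, i < j → q ^ (2 * i - d) ≠ q ^ (2 * j - d) := by
      intro i j hij h
      apply hqru (2 * (j - i)).toNat (by omega)
      rw [← zpow_natCast, Int.toNat_of_nonneg (by omega)]
      have : 2 * (j - i) = (2 * j - d) - (2 * i - d) := by ring
      rw [this, zpow_sub₀ hq0, h, div_self (tne j)]
    intro i j hij
    rcases lt_or_gt_of_ne hij with h | h
    · exact aux i j h
    · exact (aux j i h).symm
  have Fneg : ∀ i : ℤ, i < 0 → F i = ⊥ := fun i hi => by
    exact le_bot_iff.mp (iSup_Icc_le fun j h1 h2 => by omega)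
  have Fmono : ∀ i j : ℤ, i ≤ j → F i ≤ F j := fun i j hij =>
    iSup_Icc_le fun k h1 h2 x hx => mem_iSup_Icc h1 (h2.trans hij) hx
  have Rbig : ∀ i : ℤ, d < i → R i = ⊥ := fun i hi => by
    exact le_bot_iff.mp (iSup_Icc_le fun j h1 h2 => by omega)
  have Lbig : ∀ i : ℤ, d < i → L i = ⊥ := fun i hi => by
    exact le_bot_iff.mp (iSup_Icc_le fun j h1 h2 => by omega)
  have hU : ∀ i, Us i = F i ⊓ R i := by
    intro i
    by_cases h0 : i < 0
    · rw [hUout i (Or.inl h0), Fneg i h0, bot_inf_eq]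
    by_cases h1 : d < i
    · rw [hUout i (Or.inr h1), Rbig i h1, inf_bot_eq]
    · exact hUdef i (by omega) (by omega)
  have hW : ∀ i, Ws i = F i ⊓ L i := by
    intro i
    by_cases h0 : i < 0
    · rw [hWout i (Or.inl h0), Fneg i h0, bot_inf_eq]
    by_cases h1 : d < i
    · rw [hWout i (Or.inr h1), Lbig i h1, inf_bot_eq]
    · exact hWdef i (by omega) (by omega)
  have hK' : ∀ i, ∀ v ∈ Us i, K v = q ^ (2*i - d) • v := by
    intro i v hv
    by_cases h : 0 ≤ i ∧ i ≤ d
    · exact hK i h.1 h.2 v hv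
    · rw [hUout i (by omega), Submodule.mem_bot] at hv; simp [hv]
  have hB' : ∀ i, ∀ v ∈ Ws i, B v = q ^ (2*i - d) • v := by
    intro i v hv
    by_cases h : 0 ≤ i ∧ i ≤ d
    · exact hB i h.1 h.2 v hv
    · rw [hWout i (by omega), Submodule.mem_bot] at hv; simp [hv]
  have hA : ∀ i, ∀ v ∈ Vs i, A v = q ^ (2*i - d) • v := by
    intro i v hv
    by_cases h : 0 ≤ i ∧ i ≤ d
    · rw [hVeig i h.1 h.2] at hv; exact Module.End.mem_eigenspace_iff.mp hv
    · rw [hVout i (by omega), Submodule.mem_bot] at hv; simp [hv]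
  set ts : ℤ → 𝕂 := fun i => q ^ (2*i - d) + c * (q ^ (2*i - d))⁻¹ with hts
  have hAs : ∀ i, ∀ v ∈ Vst i, Astar v = ts i • v := by
    intro i v hv
    by_cases h : 0 ≤ i ∧ i ≤ d
    · rw [hVsteig i h.1 h.2, flip] at hv; exact Module.End.mem_eigenspace_iff.mp hv
    · rw [hVstout i (by omega), Submodule.mem_bot] at hv; simp [hv]
  have VsR : ∀ i j, j ≤ i → Vs i ≤ R j := by
    intro i j hij x hx
    by_cases h : i ≤ d
    · exact mem_iSup_Icc hij h hx
    · rw [hVout i (by omega), Submodule.mem_bot] at hx; rw [hx]; exact zero_mem _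
  have VsL : ∀ i j, i ≤ d - j → Vs i ≤ L j := by
    intro i j hij x hx
    by_cases h : 0 ≤ i
    · exact mem_iSup_Icc h hij hx
    · rw [hVout i (by omega), Submodule.mem_bot] at hx; rw [hx]; exact zero_mem _
  have VstF : ∀ i j, i ≤ j → Vst i ≤ F j := by
    intro i j hij x hx
    by_cases h : 0 ≤ i
    · exact mem_iSup_Icc h hij hx
    · rw [hVstout i (by omega), Submodule.mem_bot] at hx; rw [hx]; exact zero_mem _
  -- how `A` and `A*` move the flags
  have AF : ∀ (i : ℤ) (t : 𝕂), ∀ x ∈ F i, A x - t • x ∈ F (i + 1) := by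
    intro i t x hx
    refine sub_mem ?_ ((F (i+1)).smul_mem _ (Fmono i (i+1) (by omega) hx))
    exact apply_mem_of_mem_iSup A (fun j _ hj y hy => mem_sup_three htd2
      (VstF _ _ (by omega)) (VstF _ _ (by omega)) (VstF _ _ (by omega)) hy) hx
  have AsF : ∀ i, ∀ x ∈ F i, Astar x - ts i • x ∈ F (i - 1) := by
    intro i x hx
    refine apply_mem_of_mem_iSup (Q := F (i - 1)) (Astar - ts i • 1) (fun j _ hj y hy => ?_) hx
    have e : (Astar - ts i • (1 : Module.End 𝕂 V)) y = (ts j - ts i) • y := by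
      simp [hAs j y hy, sub_smul]
    rw [e]
    by_cases hji : j = i
    · rw [hji, sub_self, zero_smul]; exact zero_mem _
    · exact Submodule.smul_mem _ _ (VstF j _ (by omega) hy)
  have AR : ∀ i, ∀ x ∈ R i, A x - q ^ (2*i - d) • x ∈ R (i + 1) := by
    intro i x hx
    refine apply_mem_of_mem_iSup (Q := R (i + 1)) (A - q ^ (2*i - d) • 1)
      (fun j hj _ y hy => ?_) hx
    have e : (A - q ^ (2*i - d) • (1 : Module.End 𝕂 V)) y =
        (q ^ (2*j - d) - q ^ (2*i - d)) • y := by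
      simp [hA j y hy, sub_smul]
    rw [e]
    by_cases hji : j = i
    · rw [hji, sub_self, zero_smul]; exact zero_mem _
    · exact Submodule.smul_mem _ _ (VsR j _ (by omega) hy)
  have AL : ∀ i, ∀ x ∈ L i, A x - (q ^ (2*i - d))⁻¹ • x ∈ L (i + 1) := by
    intro i x hx
    refine apply_mem_of_mem_iSup (Q := L (i + 1)) (A - (q ^ (2*i - d))⁻¹ • 1)
      (fun j _ hj y hy => ?_) hx
    have e : (A - (q ^ (2*i - d))⁻¹ • (1 : Module.End 𝕂 V)) y =
        (q ^ (2*j - d) - (q ^ (2*i - d))⁻¹) • y := by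
      simp [hA j y hy, sub_smul]
    rw [e]
    by_cases hji : j = d - i
    · have : 2 * (d - i) - d = d - 2 * i := by ring
      rw [hji, this, flip, sub_self, zero_smul]; exact zero_mem _
    · exact Submodule.smul_mem _ _ (VsL j _ (by omega) hy)
  have AsR : ∀ (i : ℤ) (t : 𝕂), ∀ x ∈ R i, Astar x - t • x ∈ R (i - 1) := by
    intro i t x hx
    refine sub_mem ?_ ((R (i-1)).smul_mem _ (iSup_Icc_le (fun k h1 _ => VsR k _ (by omega)) hx))
    exact apply_mem_of_mem_iSup Astar (fun j hj _ y hy => mem_sup_three htd1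
      (VsR _ _ (by omega)) (VsR _ _ (by omega)) (VsR _ _ (by omega)) hy) hx
  have AsL : ∀ (i : ℤ) (t : 𝕂), ∀ x ∈ L i, Astar x - t • x ∈ L (i - 1) := by
    intro i t x hx
    refine sub_mem ?_ ((L (i-1)).smul_mem _ (iSup_Icc_le (fun k _ h1 => VsL k _ (by omega)) hx))
    exact apply_mem_of_mem_iSup Astar (fun j _ hj y hy => mem_sup_three htd1
      (VsL _ _ (by omega)) (VsL _ _ (by omega)) (VsL _ _ (by omega)) hy) hx
  -- hence how they move the split decompositions
  have AU : ∀ i, ∀ x ∈ Us i, A x - q ^ (2*i - d) • x ∈ Us (i + 1) := by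
    intro i x hx
    rw [hU] at hx ⊢
    exact ⟨AF i _ x hx.1, AR i x hx.2⟩
  have AsU : ∀ i, ∀ x ∈ Us i, Astar x - ts i • x ∈ Us (i - 1) := by
    intro i x hx
    rw [hU] at hx ⊢
    exact ⟨AsF i x hx.1, AsR i _ x hx.2⟩
  have AW : ∀ i, ∀ x ∈ Ws i, A x - (q ^ (2*i - d))⁻¹ • x ∈ Ws (i + 1) := by
    intro i x hx
    rw [hW] at hx ⊢
    exact ⟨AF i _ x hx.1, AL i x hx.2⟩
  have AsW : ∀ i, ∀ x ∈ Ws i, Astar x - ts i • x ∈ Ws (i - 1) := by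
    intro i x hx
    rw [hW] at hx ⊢
    exact ⟨AsF i x hx.1, AsL i _ x hx.2⟩
  have Une : ∀ j, 0 ≤ j → j ≤ d → Us j ≠ ⊥ := by
    intro j hj0 hjd hbot
    refine hVne j hj0 hjd ((Submodule.eq_bot_iff _).mpr fun v hv => ?_)
    -- climb the flag `⨆ k ≥ m, U_k`, on whose successive quotients `A` acts as `q ^ (2m - d)`
    have climb : ∀ n : ℕ, v ∈ ⨆ k ∈ Finset.Icc (n : ℤ) d, Us k := by
      intro n
      induction n with
      | zero => exact (hUtot ▸ Submodule.mem_top : v ∈ ⨆ k ∈ Finset.Icc (0:ℤ) d, Us k)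
      | succ n ih =>
        push_cast
        by_cases hnj : (n : ℤ) = j
        · refine iSup_Icc_le (fun k h1 h2 x hx => ?_) ih
          by_cases hk : k = n
          · rw [hk, hnj, hbot, Submodule.mem_bot] at hx; rw [hx]; exact zero_mem _
          · exact mem_iSup_Icc (by omega) h2 hx
        · have : (A - q ^ (2*(n:ℤ) - d) • (1 : Module.End 𝕂 V)) v ∈
              ⨆ k ∈ Finset.Icc ((n : ℤ) + 1) d, Us k := by
            refine apply_mem_of_mem_iSup _ (fun k h1 h2 x hx => ?_) ih
            have e : (A - q ^ (2*(n:ℤ) - d) • (1 : Module.End 𝕂 V)) x =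
                (A x - q ^ (2*k - d) • x) + (q ^ (2*k - d) - q ^ (2*(n:ℤ) - d)) • x := by
              simp [sub_smul]
            rw [e]
            refine add_mem ?_ ?_
            · have hx' := AU k x hx
              by_cases hkd : k + 1 ≤ d
              · exact mem_iSup_Icc (by omega) hkd hx'
              · rw [hUout (k + 1) (by omega), Submodule.mem_bot] at hx'
                rw [hx']; exact zero_mem _
            · by_cases hk : k = n
              · rw [hk, sub_self, zero_smul]; exact zero_mem _
              · exact Submodule.smul_mem _ _ (mem_iSup_Icc (by omega) h2 hx)
          have e : (A - q ^ (2*(n:ℤ) - d) • (1 : Module.End 𝕂 V)) v =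
              (q ^ (2*j - d) - q ^ (2*(n:ℤ) - d)) • v := by
            simp [hA j v hv, sub_smul]
          rw [e] at this
          exact (Submodule.smul_mem_iff _ (sub_ne_zero.mpr (tinj j n (Ne.symm hnj)))).mp this
    have := climb (d + 1).toNat
    rw [Finset.Icc_eq_empty (by omega)] at this
    simpa using this
  have tsinj : ∀ i j, 0 ≤ i → i < j → j ≤ d → ts i ≠ ts j := by
    intro i j hi hij hj heq
    have hVV : Vst j = Vst i := by
      rw [hVsteig j (by omega) hj, hVsteig i hi (by omega), flip, flip]
      exact congrArg _ heq.symm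
    have hFF : F j ≤ F (j - 1) := iSup_Icc_le fun k h1 h2 => by
      by_cases hk : k = j
      · rw [hk, hVV]; exact VstF i _ (by omega)
      · exact VstF k _ (by omega)
    refine Une j (by omega) hj ((Submodule.eq_bot_iff _).mpr fun x hx => ?_)
    have hx' : x ∈ Us (j - 1) := by
      rw [hU] at hx ⊢
      exact ⟨hFF hx.1, iSup_Icc_le (fun k h1 _ => VsR k _ (by omega)) hx.2⟩
    have h3 : (q ^ (2*j - d) - q ^ (2*(j-1) - d)) • x = 0 := by
      rw [sub_smul, ← hK' j x hx, ← hK' _ x hx', sub_self]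
    exact (smul_eq_zero.mp h3).resolve_left (sub_ne_zero.mpr (tinj _ _ (by omega)))
  have FG : ∀ i, F i ≤ ⨆ k ∈ Finset.Icc (0:ℤ) i, Ws k := by
    intro i
    refine iSup_Icc_le fun k hk0 hki v hv => ?_
    by_cases hkd : d < k
    · rw [hVstout k (Or.inr hkd), Submodule.mem_bot] at hv; rw [hv]; exact zero_mem _
    -- descend the flag `⨆ k ≤ m, W_k`, on whose successive quotients `A*` acts as `ts m`
    have desc : ∀ n : ℕ, i ≤ d - n → v ∈ ⨆ k ∈ Finset.Icc (0:ℤ) (d - n), Ws k := by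
      intro n
      induction n with
      | zero =>
        intro _
        rw [Nat.cast_zero, sub_zero, hWtot]; exact Submodule.mem_top
      | succ n ih =>
        intro hin
        push_cast at hin ⊢
        have ih := ih (by omega)
        have : (Astar - ts (d - n) • (1 : Module.End 𝕂 V)) v ∈
            ⨆ k ∈ Finset.Icc (0 : ℤ) (d - (n + 1)), Ws k := by
          refine apply_mem_of_mem_iSup _ (fun k h1 h2 x hx => ?_) ih
          have e : (Astar - ts (d - n) • (1 : Module.End 𝕂 V)) x =
              (Astar x - ts k • x) + (ts k - ts (d - n)) • x := by
            simp [sub_smul]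
          rw [e]
          refine add_mem ?_ ?_
          · have hx' := AsW k x hx
            by_cases hkd : 0 ≤ k - 1
            · exact mem_iSup_Icc hkd (by omega) hx'
            · rw [hWout (k - 1) (by omega), Submodule.mem_bot] at hx'
              rw [hx']; exact zero_mem _
          · by_cases hk : k = d - n
            · rw [hk, sub_self, zero_smul]; exact zero_mem _
            · exact Submodule.smul_mem _ _ (mem_iSup_Icc h1 (by omega) hx)
        have e : (Astar - ts (d - n) • (1 : Module.End 𝕂 V)) v =
            (ts k - ts (d - n)) • v := by
          simp [hAs k v hv, sub_smul]
        rw [e] at this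
        exact (Submodule.smul_mem_iff _ (sub_ne_zero.mpr
          (tsinj k (d - n) hk0 (by omega) (by omega)))).mp this
    by_cases hid : i ≤ d
    · have := desc (d - i).toNat (by omega)
      rwa [show d - ((d - i).toNat : ℤ) = i by omega] at this
    · have : v ∈ ⨆ k ∈ Finset.Icc (0:ℤ) d, Ws k := hWtot ▸ Submodule.mem_top
      exact iSup_Icc_le (fun k h1 h2 x hx => mem_iSup_Icc h1 (by omega) hx) this
  have BF : ∀ i, ∀ x ∈ F i, B x - q ^ (2*i - d) • x ∈ F (i - 1) := by
    intro i x hx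
    refine apply_mem_of_mem_iSup (Q := F (i - 1)) (B - q ^ (2*i - d) • 1)
      (fun j _ hj y hy => ?_) (FG i hx)
    have e : (B - q ^ (2*i - d) • (1 : Module.End 𝕂 V)) y =
        (q ^ (2*j - d) - q ^ (2*i - d)) • y := by
      simp [hB' j y hy, sub_smul]
    rw [e]
    by_cases hji : j = i
    · rw [hji, sub_self, zero_smul]; exact zero_mem _
    · rw [hW] at hy
      exact Submodule.smul_mem _ _ (Fmono j _ (by omega) hy.1)
  have relBA : B * A = q ^ 2 • (A * B) + (1 - q ^ 2) • (1 : Module.End 𝕂 V) := by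
    refine end_ext hWtot fun i w hw => ?_
    have h1 := hB' _ _ (AW i w hw)
    rw [map_sub, map_smul, hB' i w hw, up] at h1
    have h2 : B (A w) = _ := sub_eq_iff_eq_add.mp h1
    have ht := tne i
    simp only [Module.End.mul_apply, LinearMap.add_apply, LinearMap.smul_apply,
      Module.End.one_apply]
    rw [h2, hB' i w hw, map_smul]
    generalize q ^ (2*i - d) = t at *
    match_scalars
    · field_simp
    · field_simp
      ring
  have BR : ∀ i, ∀ x ∈ R i, B x ∈ R (i - 1) := by
    intro i x hx
    refine apply_mem_of_mem_iSup B (fun j hj hjd v hv => ?_) hx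
    by_cases hj0 : j - 1 < 0
    · have htop : R (i - 1) = ⊤ := by
        rw [eq_top_iff, ← hVtot]
        exact iSup_Icc_le fun k h1 h2 => VsR k _ (by omega)
      rw [htop]; exact Submodule.mem_top
    -- the relation between `A` and `B` puts `B v - θ_j⁻¹ v` into the eigenspace of `θ_{j-1}`
    have hmem : B v - (q ^ (2*j - d))⁻¹ • v ∈ Vs (j - 1) := by
      rw [hVeig (j - 1) (by omega) (by omega), Module.End.mem_eigenspace_iff, down, map_sub,
        map_smul, hA j v hv]
      have h1 := LinearMap.congr_fun relBA v
      simp only [Module.End.mul_apply, LinearMap.add_apply, LinearMap.smul_apply,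
        Module.End.one_apply] at h1
      rw [hA j v hv, map_smul] at h1
      have h2 : A (B v) = (q ^ 2)⁻¹ • (q ^ (2*j - d) • B v - (1 - q ^ 2) • v) := by
        rw [h1, add_sub_cancel_right, inv_smul_smul₀ hq2]
      rw [h2]
      have ht := tne j
      generalize q ^ (2*j - d) = t at *
      match_scalars
      · field_simp
      · field_simp
        ring
    have := add_mem (VsR (j - 1) (i - 1) (by omega) hmem)
      ((R (i - 1)).smul_mem (q ^ (2*j - d))⁻¹ (VsR j (i - 1) (by omega) hv))
    rwa [sub_add_cancel] at this
  have BU : ∀ i, ∀ x ∈ Us i, B x - q ^ (2*i - d) • x ∈ Us (i - 1) := by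
    intro i x hx
    rw [hU] at hx ⊢
    exact ⟨BF i x hx.1, sub_mem (BR i x hx.2)
      ((R (i-1)).smul_mem _ (iSup_Icc_le (fun k h1 _ => VsR k _ (by omega)) hx.2))⟩
  -- the three `q`-commutation relations behind `Y Z = q⁻² Z Y`
  have relKB : K * B = (q ^ 2)⁻¹ • (B * K) + (1 - (q ^ 2)⁻¹) • (K * K) := by
    refine end_ext hUtot fun i u hu => ?_
    have h1 := hK' _ _ (BU i u hu)
    rw [map_sub, map_smul, hK' i u hu, down] at h1
    have h2 : K (B u) = _ := sub_eq_iff_eq_add.mp h1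
    simp only [Module.End.mul_apply, LinearMap.add_apply, LinearMap.smul_apply]
    rw [h2, hK' i u hu, map_smul, map_smul, hK' i u hu]
    module
  have relKAs : K * Astar = (q ^ 2)⁻¹ • (Astar * K) +
      (1 - (q ^ 2)⁻¹) • (K * K + c • (1 : Module.End 𝕂 V)) := by
    refine end_ext hUtot fun i u hu => ?_
    have h1 := hK' _ _ (AsU i u hu)
    rw [map_sub, map_smul, hK' i u hu, down] at h1
    have h2 : K (Astar u) = _ := sub_eq_iff_eq_add.mp h1
    simp only [Module.End.mul_apply, LinearMap.add_apply, LinearMap.smul_apply,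
      Module.End.one_apply]
    rw [h2, hK' i u hu, map_smul, map_smul, hK' i u hu]
    simp only [hts]
    have ht := tne i
    generalize q ^ (2*i - d) = t at *
    match_scalars
    · field_simp
    · field_simp
      ring
  have relBAs : B * Astar = (q ^ 2)⁻¹ • (Astar * B) +
      (1 - (q ^ 2)⁻¹) • (B * B + c • (1 : Module.End 𝕂 V)) := by
    refine end_ext hWtot fun i u hu => ?_
    have h1 := hB' _ _ (AsW i u hu)
    rw [map_sub, map_smul, hB' i u hu, down] at h1
    have h2 : B (Astar u) = _ := sub_eq_iff_eq_add.mp h1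
    simp only [Module.End.mul_apply, LinearMap.add_apply, LinearMap.smul_apply,
      Module.End.one_apply]
    rw [h2, hB' i u hu, map_smul, map_smul, hB' i u hu]
    simp only [hts]
    have ht := tne i
    generalize q ^ (2*i - d) = t at *
    match_scalars
    · field_simp
    · field_simp
      ring
  have relKinvB : B * Kinv = (q ^ 2)⁻¹ • (Kinv * B) +
      (1 - (q ^ 2)⁻¹) • (1 : Module.End 𝕂 V) := by
    have h := congrArg (fun T => Kinv * T * Kinv) relKB
    simp only [mul_add, add_mul, mul_smul_comm, smul_mul_assoc] at h
    have e1 : Kinv * (K * B) * Kinv = B * Kinv := by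
      rw [← mul_assoc, hKinvK, one_mul]
    have e2 : Kinv * (B * K) * Kinv = Kinv * B := by
      rw [mul_assoc, mul_assoc, hKKinv, mul_one]
    have e3 : Kinv * (K * K) * Kinv = 1 := by
      rw [← mul_assoc, hKinvK, one_mul, hKKinv]
    rwa [e1, e2, e3] at h
  have key : (B - K) * (Astar - B - c • Kinv) =
      (q⁻¹ ^ 2) • ((Astar - B - c • Kinv) * (B - K)) := by
    rw [inv_pow]
    simp only [mul_sub, sub_mul, mul_smul_comm, smul_mul_assoc]
    rw [relBAs, relKAs, relKB, relKinvB, hKKinv, hKinvK]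
    module
  intro i
  rw [pow_expand q _ _ key i]
  refine Finset.sum_congr rfl fun j hj => ?_
  have hji : j ≤ i := Nat.lt_succ_iff.mp (Finset.mem_range.mp hj)
  have hsum : Astar - B - c • Kinv + (B - K) = Astar - K - c • Kinv := by abel
  rw [hsum]
  congr 1
  have h1 := pasc_mul hq0 hqru i (i - j) j (by omega)
  have hz : q ^ ((j:ℤ) - (j:ℤ) * (i:ℤ)) = (q * q⁻¹ ^ i) ^ j := by
    rw [zpow_sub₀ hq0, zpow_mul, zpow_natCast, zpow_natCast, mul_pow, inv_pow, inv_pow, ← pow_mul,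
      ← pow_mul, mul_comm i j, div_eq_mul_inv]
  rw [hz, ← mul_div_assoc, eq_div_iff (mul_ne_zero (qfac_ne_zero hq0 hqru j)
    (qfac_ne_zero hq0 hqru (i - j))), ← h1]
  ring
end

section
/- Fix an integer i ≥ 1 and define, for integers μ, ν ≥ 0, f_{μ,ν} = ∏_{s=0}^{μ−1} (K² − q^{2i−2s−2ν}·I). Then for 1 ≤ j ≤ i: (B − K)ʲ (A − K)^i = Σ_{h=0}^{j} q^{M_{h,i,j}} N_{h,i} [j choose h]_q f_{h,j} (A − K)^{i−h} (B − K)^{j−h}, where M_{h,i,j} = h(3h−1)/2 + hj − 3hi + 2ij, N_{h,i} = [i choose h]_q [h]! (q − q⁻¹)^h, and [n choose m]_q = [n]!/([m]!·[n−m]!). -/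
/-! ### Gaussian binomial coefficients -/

/-- The symmetric `q`-integer `[n] = (qⁿ - q⁻ⁿ) / (q - q⁻¹)`. -/
noncomputable def qnum {𝕂 : Type*} [Field 𝕂] (q : 𝕂) (n : ℕ) : 𝕂 :=
  (q ^ n - q⁻¹ ^ n) / (q - q⁻¹)

/-- The Gaussian binomial coefficient `[j choose h]`, set to `0` for `h > j` so that the Pascal
rules hold without exception (truncated subtraction would give a nonzero value there). -/
noncomputable def qbin {𝕂 : Type*} [Field 𝕂] (q : 𝕂) (j h : ℕ) : 𝕂 :=
  if h ≤ j then qfac 𝕂 q j / (qfac 𝕂 q h * qfac 𝕂 q (j - h)) else 0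

/-- The exponent `M_{h,i,j}`. -/
def expM (h j i : ℤ) : ℤ := (h * (3 * h - 1)) / 2 + h * j - 3 * h * i + 2 * i * j

section Scalars

variable {𝕂 : Type*} [Field 𝕂] {q : 𝕂}

lemma qfac_succ' (n : ℕ) : qfac 𝕂 q (n + 1) = qnum q (n + 1) * qfac 𝕂 q n := rfl

lemma q_sub_inv_ne (hq0 : q ≠ 0) (hqru : ∀ n : ℕ, 0 < n → q ^ n ≠ 1) : q - q⁻¹ ≠ 0 := by
  intro h
  refine hqru 2 (by norm_num) ?_
  have h1 : q = q⁻¹ := sub_eq_zero.mp h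
  rw [pow_two]
  nth_rewrite 2 [h1]
  exact mul_inv_cancel₀ hq0

lemma qnum_ne (hq0 : q ≠ 0) (hqru : ∀ n : ℕ, 0 < n → q ^ n ≠ 1) (n : ℕ) :
    qnum q (n + 1) ≠ 0 := by
  refine div_ne_zero ?_ (q_sub_inv_ne hq0 hqru)
  intro h
  refine hqru (2 * (n + 1)) (by omega) ?_
  have h1 : q ^ (n + 1) = q⁻¹ ^ (n + 1) := sub_eq_zero.mp h
  rw [two_mul, pow_add]
  nth_rewrite 2 [h1]
  rw [← mul_pow, mul_inv_cancel₀ hq0, one_pow]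

lemma qfac_ne (hq0 : q ≠ 0) (hqru : ∀ n : ℕ, 0 < n → q ^ n ≠ 1) (n : ℕ) :
    qfac 𝕂 q n ≠ 0 := by
  induction n with
  | zero => exact one_ne_zero
  | succ n ih => exact mul_ne_zero (qnum_ne hq0 hqru n) ih

lemma qbin_zero (hq0 : q ≠ 0) (hqru : ∀ n : ℕ, 0 < n → q ^ n ≠ 1) (j : ℕ) : qbin q j 0 = 1 := by
  simp [qbin, qfac, qfac_ne hq0 hqru]

lemma qbin_self (hq0 : q ≠ 0) (hqru : ∀ n : ℕ, 0 < n → q ^ n ≠ 1) (j : ℕ) : qbin q j j = 1 := by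
  simp [qbin, qfac, qfac_ne hq0 hqru]

lemma qbin_succ_self (j : ℕ) : qbin q j (j + 1) = 0 := by
  simp [qbin]

/-- `[a+b] = qᵃ [b] + q⁻ᵇ [a]`, which is what both Pascal rules come down to. -/
lemma qnum_add (hq0 : q ≠ 0) (a b : ℕ) :
    qnum q (a + b) = q ^ (a : ℤ) * qnum q b + q ^ (-(b : ℤ)) * qnum q a := by
  unfold qnum
  rw [mul_div_assoc', mul_div_assoc', ← add_div]
  congr 1
  simp only [zpow_natCast, zpow_neg, inv_pow, pow_add]
  have := pow_ne_zero a hq0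
  have := pow_ne_zero b hq0
  field_simp
  ring

lemma qbin_pascal_aux (hq0 : q ≠ 0) (hqru : ∀ n : ℕ, 0 < n → q ^ n ≠ 1) (h m : ℕ) (x y : 𝕂)
    (hxy : qnum q (h + 1 + (m + 1)) = x * qnum q (m + 1) + y * qnum q (h + 1)) :
    qbin q (h + 1 + m + 1) (h + 1) =
      x * qbin q (h + 1 + m) (h + 1) + y * qbin q (h + 1 + m) h := by
  rw [qbin, qbin, qbin, if_pos (by omega), if_pos (by omega), if_pos (by omega),
    show h + 1 + m + 1 - (h + 1) = m + 1 by omega, show h + 1 + m - (h + 1) = m by omega,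
    show h + 1 + m - h = m + 1 by omega, qfac_succ' (h + 1 + m), qfac_succ' m, qfac_succ' h,
    show h + 1 + m + 1 = h + 1 + (m + 1) by omega, hxy]
  have := qfac_ne hq0 hqru h
  have := qfac_ne hq0 hqru m
  have := qnum_ne hq0 hqru h
  have := qnum_ne hq0 hqru m
  field_simp

lemma qbin_pascal (hq0 : q ≠ 0) (hqru : ∀ n : ℕ, 0 < n → q ^ n ≠ 1) (j h : ℕ) (hj : h ≤ j) :
    qbin q (j + 1) (h + 1) =
      q ^ ((h : ℤ) + 1) * qbin q j (h + 1) + q ^ ((h : ℤ) - j) * qbin q j h := by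
  rcases hj.eq_or_lt with rfl | hlt
  · simp [qbin_self hq0 hqru, qbin_succ_self]
  · obtain ⟨m, rfl⟩ := Nat.exists_eq_add_of_le hlt
    refine qbin_pascal_aux hq0 hqru h m _ _ ?_
    rw [qnum_add hq0]
    push_cast
    congr 3
    ring

lemma qbin_pascal' (hq0 : q ≠ 0) (hqru : ∀ n : ℕ, 0 < n → q ^ n ≠ 1) (j h : ℕ) (hj : h ≤ j) :
    qbin q (j + 1) (h + 1) =
      q ^ (-(h : ℤ) - 1) * qbin q j (h + 1) + q ^ ((j : ℤ) - h) * qbin q j h := by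
  rcases hj.eq_or_lt with rfl | hlt
  · simp [qbin_self hq0 hqru, qbin_succ_self]
  · obtain ⟨m, rfl⟩ := Nat.exists_eq_add_of_le hlt
    refine qbin_pascal_aux hq0 hqru h m _ _ ?_
    rw [add_comm (h + 1), qnum_add hq0, add_comm]
    push_cast
    congr 3 <;> ring

end Scalars

lemma expM_succ_left (h j i : ℤ) : expM (h + 1) j i = expM h j i + (3 * h + 1 + j - 3 * i) := by
  unfold expM
  rw [show (h + 1) * (3 * (h + 1) - 1) = h * (3 * h - 1) + (3 * h + 1) * 2 by ring,
    Int.add_mul_ediv_right _ _ (by norm_num)]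
  ring

lemma expM_succ_right (h j i : ℤ) : expM h (j + 1) i = expM h j i + (h + 2 * i) := by
  unfold expM
  ring

/-! ### Reordering in the algebra generated by a raising and a lowering element -/

section Algebra

variable {𝕂 : Type*} [Field 𝕂] {q : 𝕂} {E : Type*} [Ring E] [Algebra 𝕂 E]

/-- `∏_{s<h} (K² - q^{t-2s})`; the element `f_{h,j}` is the case `t = 2i - 2j`. -/
noncomputable def fprod (q : 𝕂) (K : E) (t : ℤ) (h : ℕ) : E :=
  ((List.range h).map (fun s : ℕ => K ^ 2 - q ^ (t - 2 * (s : ℤ)) • (1 : E))).prod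

lemma fprod_zero (K : E) (t : ℤ) : fprod q K t 0 = 1 := by simp [fprod]

lemma fprod_succ (K : E) (t : ℤ) (h : ℕ) :
    fprod q K t (h + 1) = fprod q K t h * (K ^ 2 - q ^ (t - 2 * (h : ℤ)) • (1 : E)) := by
  simp [fprod, List.range_succ]

lemma fprod_succ' (K : E) (t : ℤ) (h : ℕ) :
    fprod q K t (h + 1) = (K ^ 2 - q ^ t • (1 : E)) * fprod q K (t - 2) h := by
  unfold fprod
  rw [List.range_succ_eq_map, List.map_cons, List.prod_cons, List.map_map]
  congr 1
  · simp
  · congr 1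
    refine List.map_congr_left fun s _ => ?_
    simp only [Function.comp]
    congr 3
    push_cast
    ring

lemma commute_fprod (K : E) (x : 𝕂) (t : ℤ) (h : ℕ) :
    Commute (K ^ 2 - x • (1 : E)) (fprod q K t h) := by
  induction h with
  | zero => rw [fprod_zero]; exact Commute.one_right _
  | succ h ih =>
    rw [fprod_succ]
    refine ih.mul_right ?_
    refine Commute.sub_right ?_ (Commute.smul_right (Commute.one_right _) _)
    exact Commute.sub_left (Commute.refl _) (Commute.smul_left (Commute.one_left _) _)

/-- Moving a lowering element past a polynomial in `K²` shifts the roots by `q⁻⁴`. -/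
lemma lower_fprod (hq0 : q ≠ 0) {K L : E} (hLK : L * K = q ^ 2 • (K * L)) (t : ℤ) (h : ℕ) :
    L * fprod q K t h = q ^ (4 * (h : ℤ)) • (fprod q K (t - 4) h * L) := by
  have hLK2 : L * K ^ 2 = q ^ (4 : ℤ) • (K ^ 2 * L) := by
    rw [pow_two, ← mul_assoc, hLK, smul_mul_assoc, mul_assoc, hLK, mul_smul_comm, smul_smul,
      ← mul_assoc]
    congr 1
    rw [← pow_add]
    norm_cast
  induction h with
  | zero => simp [fprod_zero]
  | succ h ih =>
    rw [fprod_succ, fprod_succ, ← mul_assoc, ih, smul_mul_assoc, mul_assoc, mul_sub, hLK2,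
      mul_assoc, sub_mul, mul_smul_comm, smul_mul_assoc, one_mul, mul_one]
    have e1 : q ^ (4 * ((h + 1 : ℕ) : ℤ)) = q ^ (4 * (h : ℤ)) * q ^ (4 : ℤ) := by
      rw [← zpow_add₀ hq0]
      push_cast
      ring_nf
    have e2 : q ^ (t - 2 * (h : ℤ)) = q ^ (4 : ℤ) * q ^ (t - 4 - 2 * (h : ℤ)) := by
      rw [← zpow_add₀ hq0]
      congr 1
      ring
    rw [e1, e2]
    simp only [mul_sub, mul_smul_comm, smul_sub, smul_smul, mul_assoc]

/-- The case `j = 1` of the reordering formula. -/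
lemma lower_raise_pow (hq0 : q ≠ 0) (hqru : ∀ n : ℕ, 0 < n → q ^ n ≠ 1) {K L R : E}
    (hKR : K * R = q ^ 2 • (R * K))
    (hLR : L * R = q ^ 2 • (R * L) + (q ^ 2 - 1) • (K ^ 2 - 1)) (n : ℕ) :
    L * R ^ (n + 1) = q ^ (2 * (n : ℤ) + 2) • (R ^ (n + 1) * L) +
      (q ^ (1 - (n : ℤ)) * qnum q (n + 1) * (q - q⁻¹)) •
        ((K ^ 2 - q ^ (2 * (n : ℤ)) • (1 : E)) * R ^ n) := by
  have hd := q_sub_inv_ne hq0 hqru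
  have hKK : ∀ n : ℕ, R ^ n * K ^ 2 = q ^ (-4 * (n : ℤ)) • (K ^ 2 * R ^ n) := by
    have h1 : R * K ^ 2 = q ^ (-4 : ℤ) • (K ^ 2 * R) := by
      rw [pow_two K, mul_assoc, hKR, mul_smul_comm, ← mul_assoc K R K, hKR, smul_mul_assoc,
        smul_smul, smul_smul, ← mul_assoc, mul_assoc (q ^ (-4 : ℤ))]
      have : q ^ (-4 : ℤ) * (q ^ 2 * q ^ 2) = 1 := by
        rw [← pow_add, ← zpow_natCast, ← zpow_add₀ hq0]; norm_num
      rw [this, one_smul]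
    intro n
    induction n with
    | zero => simp
    | succ n ih =>
      rw [pow_succ, mul_assoc, h1, mul_smul_comm, ← mul_assoc, ih, smul_mul_assoc, smul_smul,
        mul_assoc, ← zpow_add₀ hq0]
      congr 2
      push_cast
      ring
  induction n with
  | zero =>
    have : q ^ (1 : ℤ) * qnum q 1 * (q - q⁻¹) = q ^ 2 - 1 := by
      unfold qnum
      field_simp
    simp only [Nat.cast_zero, mul_zero, sub_zero, zero_add, pow_one, pow_zero, mul_one, zpow_zero,
      one_smul, this, hLR]
    norm_cast
  | succ n ih =>
    rw [pow_succ R (n + 1), ← mul_assoc, ih, add_mul, smul_mul_assoc, smul_mul_assoc,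
      mul_assoc (R ^ (n + 1)) L R, hLR, mul_add, mul_smul_comm, mul_smul_comm, mul_sub, hKK,
      mul_assoc _ (R ^ n) R, ← pow_succ, ← mul_assoc, ← pow_succ, mul_one, sub_mul, sub_mul,
      smul_mul_assoc, smul_mul_assoc, one_mul]
    push_cast
    have e1 : q ^ (2 * (n : ℤ) + 2) * q ^ 2 = q ^ (2 * ((n : ℤ) + 1) + 2) := by
      rw [← zpow_natCast q 2, ← zpow_add₀ hq0]; congr 1
    have hn := pow_ne_zero n hq0
    -- Comparing coefficients of `K² Rⁿ⁺¹` and of `Rⁿ⁺¹`.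
    have e2 : q ^ (2 * (n : ℤ) + 2) * (q ^ 2 - 1) * q ^ (-4 * ((n : ℤ) + 1)) +
        q ^ (1 - (n : ℤ)) * qnum q (n + 1) * (q - q⁻¹) =
        q ^ (1 - ((n : ℤ) + 1)) * qnum q (n + 1 + 1) * (q - q⁻¹) := by
      unfold qnum
      rw [mul_assoc _ _ (q - q⁻¹), mul_assoc _ _ (q - q⁻¹), div_mul_cancel₀ _ hd,
        div_mul_cancel₀ _ hd,
        show (2 * (n : ℤ) + 2) = (n : ℤ) * 2 + (2 : ℕ) by push_cast; ring,
        show (-4 * ((n : ℤ) + 1)) = -((n : ℤ) * 4) - (4 : ℕ) by push_cast; ring,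
        show (1 - ((n : ℤ) + 1)) = -n by ring]
      simp only [zpow_add₀ hq0, zpow_sub₀ hq0, zpow_neg, zpow_mul, zpow_natCast, inv_pow, pow_succ,
        zpow_ofNat]
      field_simp
      ring
    have e3 : q ^ (2 * (n : ℤ) + 2) * (q ^ 2 - 1) +
        q ^ (1 - (n : ℤ)) * qnum q (n + 1) * (q - q⁻¹) * q ^ (2 * (n : ℤ)) =
        q ^ (1 - ((n : ℤ) + 1)) * qnum q (n + 1 + 1) * (q - q⁻¹) * q ^ (2 * ((n : ℤ) + 1)) := by
      unfold qnum
      rw [mul_assoc _ _ (q - q⁻¹), mul_assoc _ _ (q - q⁻¹), div_mul_cancel₀ _ hd,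
        div_mul_cancel₀ _ hd,
        show (2 * (n : ℤ) + 2) = (n : ℤ) * 2 + (2 : ℕ) by push_cast; ring,
        show 2 * ((n : ℤ) + 1) = (n : ℤ) * 2 + (2 : ℕ) by push_cast; ring,
        show 2 * (n : ℤ) = (n : ℤ) * 2 by ring,
        show (1 - ((n : ℤ) + 1)) = -n by ring]
      simp only [zpow_add₀ hq0, zpow_sub₀ hq0, zpow_neg, zpow_mul, zpow_natCast, inv_pow, pow_succ,
        zpow_ofNat]
      field_simp
      ring
    rw [← e1]
    match_scalars
    · ring
    · linear_combination e2
    · linear_combination -e3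

/-- The reordering formula for elements `K, L, R` with `KR = q² RK`, `LK = q² KL` and
`LR - q² RL = (q² - 1)(K² - 1)`. Multiplying the formula for `j` by `L` on the left and comparing
coefficients gives a polynomial identity of degree one in `K²`; its two coefficients are the two
Pascal rules. -/
lemma reorder (hq0 : q ≠ 0) (hqru : ∀ n : ℕ, 0 < n → q ^ n ≠ 1) {K L R : E}
    (hKR : K * R = q ^ 2 • (R * K)) (hLK : L * K = q ^ 2 • (K * L))
    (hLR : L * R = q ^ 2 • (R * L) + (q ^ 2 - 1) • (K ^ 2 - 1)) (i j : ℕ) (hj : j ≤ i) :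
    L ^ j * R ^ i = ∑ h ∈ Finset.range (j + 1),
      (q ^ expM h j i * (qfac 𝕂 q i / qfac 𝕂 q (i - h) * (q - q⁻¹) ^ h) * qbin q j h) •
        (fprod q K (2 * (i : ℤ) - 2 * j) h * R ^ (i - h) * L ^ (j - h)) := by
  induction j with
  | zero =>
    simp [expM, fprod_zero, qbin_zero hq0 hqru, qfac_ne hq0 hqru]
  | succ j ih =>
    rw [pow_succ', mul_assoc, ih (by omega), Finset.mul_sum]
    obtain ⟨N, hN⟩ : ∃ N : ℕ → 𝕂, ∀ h, qfac 𝕂 q i / qfac 𝕂 q (i - h) * (q - q⁻¹) ^ h = N h :=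
      ⟨_, fun _ => rfl⟩
    simp only [hN]
    have hNs : ∀ h, h ≤ j → N (h + 1) = N h * (qnum q (i - (h + 1) + 1) * (q - q⁻¹)) := by
      intro h hh
      rw [← hN, ← hN, show i - h = i - (h + 1) + 1 by omega, qfac_succ', pow_succ]
      have := qfac_ne hq0 hqru (i - (h + 1))
      have := qnum_ne hq0 hqru (i - (h + 1))
      field_simp
    set t : ℤ := 2 * (i : ℤ) - 2 * ((j + 1 : ℕ) : ℤ) - 2 with ht
    let a : ℕ → E := fun h => (q ^ (expM h j i + 2 * h + 2 * i) * N h * qbin q j h) •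
        (fprod q K t h * R ^ (i - h) * L ^ (j + 1 - h))
    let b : ℕ → E := fun h =>
      (q ^ (expM (h + 1) j i + 2 * i + 2 * h + 1 - j) * N (h + 1) * qbin q j h) •
        (fprod q K t h * (K ^ 2 - q ^ (2 * (i : ℤ) - 2 * h - 2) • (1 : E)) *
          R ^ (i - (h + 1)) * L ^ (j - h))
    have hterm : ∀ h ∈ Finset.range (j + 1),
        L * ((q ^ expM h j i * N h * qbin q j h) •
          (fprod q K (2 * (i : ℤ) - 2 * j) h * R ^ (i - h) * L ^ (j - h))) = a h + b h := by
      intro h hh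
      have hh' : h ≤ j := by simpa [Nat.lt_succ_iff] using hh
      obtain ⟨n, hn⟩ : ∃ n, i = n + 1 + h := ⟨i - (h + 1), by omega⟩
      have hin : i - h = n + 1 := by omega
      have hin' : i - (h + 1) = n := by omega
      have hic : (i : ℤ) = n + 1 + h := by rw [hn]; push_cast; ring
      have hNh := hNs h hh'
      rw [hin'] at hNh
      simp only [a, b]
      rw [hNh, hin, hin', mul_smul_comm, ← mul_assoc, ← mul_assoc, lower_fprod hq0 hLK,
        show 2 * (i : ℤ) - 2 * j - 4 = t by rw [ht]; push_cast; ring, smul_mul_assoc,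
        mul_assoc _ L, lower_raise_pow hq0 hqru hKR hLR, mul_add, mul_smul_comm, mul_smul_comm,
        smul_mul_assoc, add_mul, smul_mul_assoc, smul_mul_assoc, smul_add, smul_add, smul_smul,
        smul_smul, smul_smul, smul_smul, show j + 1 - h = j - h + 1 by omega, pow_succ' L,
        show (2 * (i : ℤ) - 2 * h - 2) = 2 * n by rw [hic]; ring, expM_succ_left]
      congr 1
      · rw [← mul_assoc (fprod q K t h), mul_assoc _ L]
        congr 1
        rw [show expM h j i + 2 * (h : ℤ) + 2 * i = expM h j i + 4 * h + (2 * n + 2) by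
          rw [hic]; ring, zpow_add₀ hq0 (expM h j i + 4 * h), zpow_add₀ hq0 (expM h j i)]
        ring
      · rw [← mul_assoc (fprod q K t h)]
        congr 1
        rw [show expM h j i + (3 * (h : ℤ) + 1 + j - 3 * i) + 2 * i + 2 * h + 1 - j =
          expM h j i + 4 * h + (1 - n) by rw [hic]; ring, zpow_add₀ hq0 (expM h j i + 4 * h),
          zpow_add₀ hq0 (expM h j i)]
        ring
    rw [Finset.sum_congr rfl hterm, Finset.sum_add_distrib, Finset.sum_range_succ' _ (j + 1)]
    have hlast : a (j + 1) = 0 := by simp [a, qbin_succ_self]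
    have hsum : ∑ h ∈ Finset.range (j + 1), a h = ∑ h ∈ Finset.range (j + 1), a (h + 1) + a 0 := by
      rw [← Finset.sum_range_succ' a (j + 1), Finset.sum_range_succ a (j + 1), hlast, add_zero]
    rw [hsum, add_right_comm, ← Finset.sum_add_distrib]
    congr 1
    · refine Finset.sum_congr rfl fun h hh => ?_
      have hh' : h ≤ j := by simpa [Nat.lt_succ_iff] using hh
      simp only [a, b]
      rw [fprod_succ, fprod_succ' K (2 * (i : ℤ) - 2 * ((j + 1 : ℕ) : ℤ)), ← ht,
        (commute_fprod K _ t h).eq, Nat.add_sub_add_right]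
      simp only [mul_assoc (fprod q K t h)]
      rw [← mul_smul_comm _ (fprod q K t h), ← mul_smul_comm _ (fprod q K t h),
        ← mul_smul_comm _ (fprod q K t h), ← mul_add]
      congr 1
      simp only [sub_mul, smul_mul_assoc, one_mul]
      have p1 := qbin_pascal hq0 hqru j h hh'
      have p2 := qbin_pascal' hq0 hqru j h hh'
      push_cast
      rw [expM_succ_right]
      set m := expM ((h : ℤ) + 1) j i with hm
      have f1 : q ^ (m + 2 * ((h : ℤ) + 1) + 2 * i) =
          q ^ (m + ((h : ℤ) + 1 + 2 * i)) * q ^ ((h : ℤ) + 1) := by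
        rw [← zpow_add₀ hq0]; congr 1; ring
      have f2 : q ^ (m + 2 * (i : ℤ) + 2 * h + 1 - j) =
          q ^ (m + ((h : ℤ) + 1 + 2 * i)) * q ^ ((h : ℤ) - j) := by
        rw [← zpow_add₀ hq0]; congr 1; ring
      have f3 : q ^ ((h : ℤ) + 1) * q ^ (t - 2 * (h : ℤ)) =
          q ^ (2 * (i : ℤ) - 2 * (j + 1)) * q ^ (-(h : ℤ) - 1) := by
        rw [← zpow_add₀ hq0, ← zpow_add₀ hq0, ht]; congr 1; push_cast; ring
      have f4 : q ^ ((h : ℤ) - j) * q ^ (2 * (i : ℤ) - 2 * h - 2) =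
          q ^ (2 * (i : ℤ) - 2 * (j + 1)) * q ^ ((j : ℤ) - h) := by
        rw [← zpow_add₀ hq0, ← zpow_add₀ hq0]; congr 1; ring
      rw [f1, f2]
      match_scalars
      · linear_combination -(q ^ (m + ((h : ℤ) + 1 + 2 * i)) * N (h + 1)) * p1
      · linear_combination (q ^ (m + ((h : ℤ) + 1 + 2 * i)) * N (h + 1)) *
          (q ^ (2 * (i : ℤ) - 2 * (j + 1)) * p2 - qbin q j (h + 1) * f3 - qbin q j h * f4)
    · simp only [a, fprod_zero, qbin_zero hq0 hqru]
      push_cast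
      rw [expM_succ_right]
      congr 4
      ring_nf

end Algebra


/-! ### Split decompositions -/

section Split

variable {𝕂 : Type*} [Field 𝕂] {V : Type*} [AddCommGroup V] [Module 𝕂 V]

/-- The increasing flag `⋯ + P (i-1) + P i`. -/
def lowerSum (P : ℤ → Submodule 𝕂 V) (i : ℤ) : Submodule 𝕂 V := ⨆ j, ⨆ (_ : j ≤ i), P j

/-- The decreasing flag `P i + P (i+1) + ⋯`. -/
def upperSum (P : ℤ → Submodule 𝕂 V) (i : ℤ) : Submodule 𝕂 V := ⨆ j, ⨆ (_ : i ≤ j), P j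

lemma le_lowerSum (P : ℤ → Submodule 𝕂 V) {i j : ℤ} (h : j ≤ i) : P j ≤ lowerSum P i :=
  le_iSup₂_of_le j h le_rfl

lemma le_upperSum (P : ℤ → Submodule 𝕂 V) {i j : ℤ} (h : i ≤ j) : P j ≤ upperSum P i :=
  le_iSup₂_of_le j h le_rfl

lemma lowerSum_mono (P : ℤ → Submodule 𝕂 V) {i j : ℤ} (h : j ≤ i) :
    lowerSum P j ≤ lowerSum P i :=
  iSup₂_le fun _ hk => le_lowerSum P (hk.trans h)

lemma upperSum_anti (P : ℤ → Submodule 𝕂 V) {i j : ℤ} (h : i ≤ j) :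
    upperSum P j ≤ upperSum P i :=
  iSup₂_le fun _ hk => le_upperSum P (h.trans hk)

lemma sub_smul_mem_lowerSum {P : ℤ → Submodule 𝕂 V} {X : Module.End 𝕂 V} {μ : ℤ → 𝕂}
    (h : ∀ i, ∀ v ∈ P i, X v = μ i • v) (i : ℤ) {v : V} (hv : v ∈ lowerSum P i) :
    X v - μ i • v ∈ lowerSum P (i - 1) := by
  suffices H : lowerSum P i ≤ (lowerSum P (i - 1)).comap (X - μ i • (1 : Module.End 𝕂 V)) by
    simpa using H hv
  refine iSup₂_le fun j hj w hw => ?_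
  simp only [Submodule.mem_comap, LinearMap.sub_apply, LinearMap.smul_apply, Module.End.one_apply,
    h j w hw, ← sub_smul]
  rcases hj.eq_or_lt with rfl | hlt
  · simp
  · exact Submodule.smul_mem _ _ (le_lowerSum P (by omega) hw)

lemma sub_smul_mem_upperSum {P : ℤ → Submodule 𝕂 V} {X : Module.End 𝕂 V} {μ : ℤ → 𝕂}
    (h : ∀ i, ∀ v ∈ P i, X v = μ i • v) (i : ℤ) {v : V} (hv : v ∈ upperSum P i) :
    X v - μ i • v ∈ upperSum P (i + 1) := by
  suffices H : upperSum P i ≤ (upperSum P (i + 1)).comap (X - μ i • (1 : Module.End 𝕂 V)) by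
    simpa using H hv
  refine iSup₂_le fun j hj w hw => ?_
  simp only [Submodule.mem_comap, LinearMap.sub_apply, LinearMap.smul_apply, Module.End.one_apply,
    h j w hw, ← sub_smul]
  rcases hj.eq_or_lt with rfl | hlt
  · simp
  · exact Submodule.smul_mem _ _ (le_upperSum P (by omega) hw)

lemma map_mem_lowerSum {P : ℤ → Submodule 𝕂 V} {X : Module.End 𝕂 V}
    (h : ∀ i, Submodule.map X (P i) ≤ P (i - 1) ⊔ P i ⊔ P (i + 1)) (i : ℤ) {v : V}
    (hv : v ∈ lowerSum P i) : X v ∈ lowerSum P (i + 1) := by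
  suffices H : lowerSum P i ≤ (lowerSum P (i + 1)).comap X from H hv
  refine iSup₂_le fun j hj => Submodule.map_le_iff_le_comap.mp ((h j).trans ?_)
  exact sup_le (sup_le (le_lowerSum P (by omega)) (le_lowerSum P (by omega)))
    (le_lowerSum P (by omega))

lemma map_mem_upperSum {P : ℤ → Submodule 𝕂 V} {X : Module.End 𝕂 V}
    (h : ∀ i, Submodule.map X (P i) ≤ P (i - 1) ⊔ P i ⊔ P (i + 1)) (i : ℤ) {v : V}
    (hv : v ∈ upperSum P i) : X v ∈ upperSum P (i - 1) := by
  suffices H : upperSum P i ≤ (upperSum P (i - 1)).comap X from H hv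
  refine iSup₂_le fun j hj => Submodule.map_le_iff_le_comap.mp ((h j).trans ?_)
  exact sup_le (sup_le (le_upperSum P (by omega)) (le_upperSum P (by omega)))
    (le_upperSum P (by omega))

/-- What is used of a tridiagonal pair `A, A*`: `P i` and `Q i` consist of eigenvectors of `A` and
`A*`, each map acts tridiagonally on the other family, `Q` vanishes at negative indices, and the
`P i` with `i ≥ 1` do not span. Reversing the order of the eigenspaces of `A` gives another
instance, so that both split decompositions are covered at once. -/
structure SplitData (A Astar : Module.End 𝕂 V) (θ θs : ℤ → 𝕂) (P Q : ℤ → Submodule 𝕂 V) :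
    Prop where
  eigP : ∀ i, ∀ v ∈ P i, A v = θ i • v
  eigQ : ∀ i, ∀ v ∈ Q i, Astar v = θs i • v
  triP : ∀ i, Submodule.map Astar (P i) ≤ P (i - 1) ⊔ P i ⊔ P (i + 1)
  triQ : ∀ i, Submodule.map A (Q i) ≤ Q (i - 1) ⊔ Q i ⊔ Q (i + 1)
  irr : ∀ W : Submodule 𝕂 V, Submodule.map A W ≤ W → Submodule.map Astar W ≤ W → W = ⊥ ∨ W = ⊤
  outQ : ∀ i, i < 0 → Q i = ⊥
  proper : upperSum P 1 ≠ ⊤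

namespace SplitData

variable {A Astar : Module.End 𝕂 V} {θ θs : ℤ → 𝕂} {P Q : ℤ → Submodule 𝕂 V}

/-- The intersections `(⋯ + Q i) ∩ (P (i+1) + ⋯)` span a subspace invariant under both maps and
contained in the proper subspace `P 1 + P 2 + ⋯`, so they vanish by irreducibility. -/
lemma inf_eq_bot (D : SplitData A Astar θ θs P Q) (i : ℤ) :
    lowerSum Q i ⊓ upperSum P (i + 1) = ⊥ := by
  set T : ℤ → Submodule 𝕂 V := fun i => lowerSum Q i ⊓ upperSum P (i + 1) with hT
  have hW : (⨆ i, T i) ≤ upperSum P 1 := by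
    refine iSup_le fun i => ?_
    rcases lt_or_ge i 0 with hi | hi
    · have : lowerSum Q i = ⊥ :=
        eq_bot_iff.mpr (iSup₂_le fun j hj => (D.outQ j (by omega)).le)
      simp [hT, this]
    · exact inf_le_right.trans (upperSum_anti P (by omega))
  have hA : Submodule.map A (⨆ i, T i) ≤ ⨆ i, T i := by
    rw [Submodule.map_le_iff_le_comap]
    refine iSup_le fun i v hv => ?_
    have h1 : A v - θ (i + 1) • v ∈ T (i + 1) :=
      ⟨Submodule.sub_mem _ (map_mem_lowerSum D.triQ i hv.1)
          (Submodule.smul_mem _ _ (lowerSum_mono Q (by omega) hv.1)),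
        sub_smul_mem_upperSum D.eigP (i + 1) hv.2⟩
    have := Submodule.add_mem _ (le_iSup T (i + 1) h1)
      (Submodule.smul_mem _ (θ (i + 1)) (le_iSup T i hv))
    rwa [sub_add_cancel] at this
  have hAs : Submodule.map Astar (⨆ i, T i) ≤ ⨆ i, T i := by
    rw [Submodule.map_le_iff_le_comap]
    refine iSup_le fun i v hv => ?_
    have h1 : Astar v - θs i • v ∈ T (i - 1) := by
      refine ⟨sub_smul_mem_lowerSum D.eigQ i hv.1, ?_⟩
      have h2 := map_mem_upperSum D.triP (i + 1) hv.2
      rw [show i + 1 - 1 = i - 1 + 1 by ring] at h2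
      exact Submodule.sub_mem _ h2
        (Submodule.smul_mem _ _ (upperSum_anti P (by omega) hv.2))
    have := Submodule.add_mem _ (le_iSup T (i - 1) h1)
      (Submodule.smul_mem _ (θs i) (le_iSup T i hv))
    rwa [sub_add_cancel] at this
  rcases D.irr _ hA hAs with h | h
  · exact eq_bot_iff.mpr ((le_iSup T i).trans h.le)
  · exact absurd (eq_top_iff.mpr (h.ge.trans hW)) D.proper

variable {U : ℤ → Submodule 𝕂 V}

lemma lowerSum_le (D : SplitData A Astar θ θs P Q)
    (hU : ∀ i, U i = lowerSum Q i ⊓ upperSum P i) (hUtop : (⨆ i, U i) = ⊤) (i : ℤ) :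
    lowerSum Q i ≤ lowerSum U i := by
  intro v hv
  have hsup : (⊤ : Submodule 𝕂 V) ≤ lowerSum U i ⊔ upperSum U (i + 1) := by
    rw [← hUtop]
    refine iSup_le fun j => ?_
    rcases le_or_gt j i with h | h
    · exact (le_lowerSum U h).trans le_sup_left
    · exact (le_upperSum U h).trans le_sup_right
  obtain ⟨a, ha, b, hb, rfl⟩ := Submodule.mem_sup.mp (hsup (Submodule.mem_top (x := v)))
  have ha' : a ∈ lowerSum Q i := by
    refine (iSup₂_le fun j hj => ?_ : lowerSum U i ≤ lowerSum Q i) ha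
    rw [hU]
    exact inf_le_left.trans (lowerSum_mono Q hj)
  have hb' : b ∈ upperSum P (i + 1) := by
    refine (iSup₂_le fun j hj => ?_ : upperSum U (i + 1) ≤ upperSum P (i + 1)) hb
    rw [hU]
    exact inf_le_right.trans (upperSum_anti P hj)
  have hb'' : b ∈ lowerSum Q i := by
    simpa using Submodule.sub_mem _ hv ha'
  have : b ∈ lowerSum Q i ⊓ upperSum P (i + 1) := ⟨hb'', hb'⟩
  rw [D.inf_eq_bot, Submodule.mem_bot] at this
  simpa [this] using ha

/-- A map that is scalar on each `U i` acts upper triangularly on the flag of the `Q i`. -/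
lemma triangular (D : SplitData A Astar θ θs P Q)
    (hU : ∀ i, U i = lowerSum Q i ⊓ upperSum P i) (hUtop : (⨆ i, U i) = ⊤)
    {M : Module.End 𝕂 V} {μ : ℤ → 𝕂} (hM : ∀ i, ∀ v ∈ U i, M v = μ i • v) (i : ℤ) {v : V}
    (hv : v ∈ lowerSum Q i) : M v - μ i • v ∈ lowerSum Q (i - 1) := by
  have h := sub_smul_mem_lowerSum hM i (D.lowerSum_le hU hUtop i hv)
  refine (iSup₂_le fun j hj => ?_ : lowerSum U (i - 1) ≤ lowerSum Q (i - 1)) h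
  rw [hU]
  exact inf_le_left.trans (lowerSum_mono Q hj)

/-- Since `A - θ i` maps `U i` into `U (i+1)`, a map with eigenvalues in geometric progression on
the `U i` satisfies a `q`-commutation relation with `A`. -/
lemma comm_rel (D : SplitData A Astar θ θs P Q)
    (hU : ∀ i, U i = lowerSum Q i ⊓ upperSum P i) (hUtop : (⨆ i, U i) = ⊤)
    {M N : Module.End 𝕂 V} {μ : ℤ → 𝕂} {t : 𝕂} (hμ : ∀ i, μ (i + 1) = t * μ i)
    (hM : ∀ i, ∀ v ∈ U i, M v = μ i • v) (hN : ∀ i, ∀ v ∈ U i, N v = (θ i * μ i) • v) :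
    M * A - t • (A * M) = (1 - t) • N := by
  rw [← sub_eq_zero, ← LinearMap.ker_eq_top, eq_top_iff, ← hUtop]
  refine iSup_le fun i v hv => ?_
  have hv' := hv
  rw [hU] at hv'
  have hr : A v - θ i • v ∈ U (i + 1) := by
    rw [hU]
    exact ⟨Submodule.sub_mem _ (map_mem_lowerSum D.triQ i hv'.1)
      (Submodule.smul_mem _ _ (lowerSum_mono Q (by omega) hv'.1)),
      sub_smul_mem_upperSum D.eigP i hv'.2⟩
  have h1 := hM _ _ hr
  rw [map_sub, map_smul, hM i v hv, hμ, sub_eq_iff_eq_add] at h1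
  simp only [LinearMap.mem_ker, LinearMap.sub_apply, LinearMap.smul_apply, Module.End.mul_apply,
    h1, hM i v hv, hN i v hv, map_smul]
  module

end SplitData

lemma zpow_inj_of_not_root {q : 𝕂} (hq0 : q ≠ 0) (hqru : ∀ n : ℕ, 0 < n → q ^ n ≠ 1) {m n : ℤ}
    (h : q ^ m = q ^ n) : m = n := by
  by_contra hne
  wlog hlt : n < m generalizing m n
  · exact this h.symm (Ne.symm hne) (by omega)
  refine hqru (m - n).toNat (by omega) ?_
  rw [← zpow_natCast, Int.toNat_of_nonneg (by omega), zpow_sub₀ hq0, h,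
    div_self (zpow_ne_zero _ hq0)]

lemma upperSum_ne_top {A : Module.End 𝕂 V} {θ : ℤ → 𝕂} {P : ℤ → Submodule 𝕂 V}
    (h : ∀ i, ∀ v ∈ P i, A v = θ i • v) (hθ : ∀ i, 1 ≤ i → θ i ≠ θ 0) (h0 : P 0 ≠ ⊥) :
    upperSum P 1 ≠ ⊤ := by
  intro htop
  refine h0 (eq_bot_iff.mpr ?_)
  have hle : ∀ i, P i ≤ A.eigenspace (θ i) := fun i v hv =>
    Module.End.mem_eigenspace_iff.mpr (h i v hv)
  have hdis := A.eigenspaces_iSupIndep (θ 0)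
  refine hdis (hle 0) ((le_top.trans htop.ge).trans (iSup₂_le fun j hj => ?_))
  exact (hle j).trans (le_iSup₂_of_le (θ j) (hθ j hj) le_rfl)

end Split


/-! ### The relation between `B` and `K⁻¹` -/

section Equitable

variable {𝕂 : Type*} [Field 𝕂] {V : Type*} [AddCommGroup V] [Module 𝕂 V]

/-- The relation between `B` and `K⁻¹`. The `q`-commutation relations of `A` with `B` and with
`K⁻¹` force `X = q B K⁻¹ - q⁻¹ K⁻¹ B - (q - q⁻¹)` to commute with `A`, so `X` preserves the flag of
the `P i`; as `X` also strictly lowers the flag of the `Q i`, it maps each `U i` to `0`. -/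
lemma equitable_rel {q : 𝕂} (hq0 : q ≠ 0) {A Astar B Y : Module.End 𝕂 V} {θ θs μ ν : ℤ → 𝕂}
    {P Q U : ℤ → Submodule 𝕂 V} (D : SplitData A Astar θ θs P Q)
    (hU : ∀ i, U i = lowerSum Q i ⊓ upperSum P i) (hUtop : (⨆ i, U i) = ⊤)
    (hY : ∀ i, ∀ v ∈ U i, Y v = ν i • v)
    (hB : ∀ i, ∀ v ∈ lowerSum Q i, B v - μ i • v ∈ lowerSum Q (i - 1))
    (hμν : ∀ i, μ i * ν i = 1)
    (relY : Y * A - (q ^ 2)⁻¹ • (A * Y) = (1 - (q ^ 2)⁻¹) • (1 : Module.End 𝕂 V))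
    (relB : B * A - q ^ 2 • (A * B) = (1 - q ^ 2) • (1 : Module.End 𝕂 V))
    (hP : ∀ i, P i = ⊥ ∨ P i = A.eigenspace (θ i)) :
    q • (B * Y) - q⁻¹ • (Y * B) = (q - q⁻¹) • (1 : Module.End 𝕂 V) := by
  set X := q • (B * Y) - q⁻¹ • (Y * B) - (q - q⁻¹) • (1 : Module.End 𝕂 V) with hX
  have hYA : Y * A = (q ^ 2)⁻¹ • (A * Y) + (1 - (q ^ 2)⁻¹) • (1 : Module.End 𝕂 V) := by
    rw [← relY]; abel
  have hBA : B * A = q ^ 2 • (A * B) + (1 - q ^ 2) • (1 : Module.End 𝕂 V) := by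
    rw [← relB]; abel
  have hcomm : X * A = A * X := by
    simp only [hX, sub_mul, mul_sub, smul_mul_assoc, mul_smul_comm, one_mul, mul_one, mul_assoc]
    rw [hYA, hBA]
    simp only [mul_add, mul_smul_comm, mul_one, ← mul_assoc]
    rw [hYA, hBA]
    simp only [add_mul, smul_mul_assoc, one_mul]
    match_scalars <;> field_simp <;> ring
  have hXP : ∀ i, upperSum P i ≤ (upperSum P i).comap X := by
    intro i
    refine iSup₂_le fun j hj v hv => le_upperSum P hj ?_
    rcases hP j with h | h
    · rw [h, Submodule.mem_bot] at hv
      simp [hv]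
    · rw [h, Module.End.mem_eigenspace_iff] at hv ⊢
      rw [← Module.End.mul_apply, ← hcomm, Module.End.mul_apply, hv, map_smul]
  have hX0 : X = 0 := by
    rw [← LinearMap.ker_eq_top, eq_top_iff, ← hUtop]
    refine iSup_le fun i v hv => ?_
    have hv' := hv
    rw [hU] at hv'
    obtain ⟨b, hb, hBv⟩ : ∃ b ∈ lowerSum Q (i - 1), B v = μ i • v + b :=
      ⟨_, hB i v hv'.1, by abel⟩
    have hYb : Y b ∈ lowerSum Q (i - 1) := by
      have h1 := lowerSum_mono Q (by omega) (D.triangular hU hUtop hY (i - 1) hb)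
        (i := i - 1)
      have h2 := Submodule.add_mem _ h1 (Submodule.smul_mem _ (ν (i - 1)) hb)
      rwa [sub_add_cancel] at h2
    have hXv : X v = (q * ν i) • b - q⁻¹ • Y b := by
      simp only [hX, LinearMap.sub_apply, LinearMap.smul_apply, Module.End.mul_apply,
        Module.End.one_apply, hY i v hv, map_smul, hBv, map_add]
      match_scalars
      · linear_combination (q - q⁻¹) * hμν i
      · ring
      · ring
    have hmem : X v ∈ lowerSum Q (i - 1) ⊓ upperSum P (i - 1 + 1) := by
      refine ⟨?_, ?_⟩
      · rw [hXv]
        exact Submodule.sub_mem _ (Submodule.smul_mem _ _ hb) (Submodule.smul_mem _ _ hYb)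
      · rw [sub_add_cancel]
        exact hXP i hv'.2
    rwa [D.inf_eq_bot, Submodule.mem_bot] at hmem
  exact sub_eq_zero.mp hX0

end Equitable


/-! ### The reordering formula for a tridiagonal pair -/

theorem stmt_13
    {𝕂 : Type*} [Field 𝕂] [IsAlgClosed 𝕂]
    {V : Type*} [AddCommGroup V] [Module 𝕂 V] [FiniteDimensional 𝕂 V]
    (hV : 0 < Module.finrank 𝕂 V)
    {q : 𝕂} (hq0 : q ≠ 0) (hqru : ∀ n : ℕ, 0 < n → q ^ n ≠ 1)
    {c : 𝕂} (hc : c ≠ 0)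
    (A Astar : Module.End 𝕂 V)
    (d : ℤ) (hd : 0 ≤ d)
    (Vs Vst : ℤ → Submodule 𝕂 V)
    (hVout : ∀ i : ℤ, i < 0 ∨ d < i → Vs i = ⊥)
    (hVstout : ∀ i : ℤ, i < 0 ∨ d < i → Vst i = ⊥)
    (hVeig : ∀ i : ℤ, 0 ≤ i → i ≤ d → Vs i = Module.End.eigenspace A (q ^ (2*i - d)))
    (hVne : ∀ i : ℤ, 0 ≤ i → i ≤ d → Vs i ≠ ⊥)
    (hVtot : (⨆ i ∈ Finset.Icc (0:ℤ) d, Vs i) = ⊤)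
    (hVsteig : ∀ i : ℤ, 0 ≤ i → i ≤ d →
      Vst i = Module.End.eigenspace Astar (q ^ (2*i - d) + c * q ^ (d - 2*i)))
    (hVstne : ∀ i : ℤ, 0 ≤ i → i ≤ d → Vst i ≠ ⊥)
    (hVsttot : (⨆ i ∈ Finset.Icc (0:ℤ) d, Vst i) = ⊤)
    (htd1 : ∀ i : ℤ, Submodule.map Astar (Vs i) ≤ Vs (i-1) ⊔ Vs i ⊔ Vs (i+1))
    (htd2 : ∀ i : ℤ, Submodule.map A (Vst i) ≤ Vst (i-1) ⊔ Vst i ⊔ Vst (i+1))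
    (hirr : ∀ W : Submodule 𝕂 V, Submodule.map A W ≤ W → Submodule.map Astar W ≤ W →
      W = ⊥ ∨ W = ⊤)
    (Us : ℤ → Submodule 𝕂 V)
    (hUout : ∀ i : ℤ, i < 0 ∨ d < i → Us i = ⊥)
    (hUdef : ∀ i : ℤ, 0 ≤ i → i ≤ d →
      Us i = (⨆ j ∈ Finset.Icc (0:ℤ) i, Vst j) ⊓ (⨆ j ∈ Finset.Icc i d, Vs j))
    (hUtot : (⨆ i ∈ Finset.Icc (0:ℤ) d, Us i) = ⊤)
    (K Kinv : Module.End 𝕂 V)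
    (hK : ∀ i : ℤ, 0 ≤ i → i ≤ d → ∀ v ∈ Us i, K v = q ^ (2*i - d) • v)
    (hKinv : ∀ i : ℤ, 0 ≤ i → i ≤ d → ∀ v ∈ Us i, Kinv v = q ^ (d - 2*i) • v)
    (hKKinv : K * Kinv = 1) (hKinvK : Kinv * K = 1)
    (Ws : ℤ → Submodule 𝕂 V)
    (hWout : ∀ i : ℤ, i < 0 ∨ d < i → Ws i = ⊥)
    (hWdef : ∀ i : ℤ, 0 ≤ i → i ≤ d →
      Ws i = (⨆ j ∈ Finset.Icc (0:ℤ) i, Vst j) ⊓ (⨆ j ∈ Finset.Icc (0:ℤ) (d - i), Vs j))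
    (hWtot : (⨆ i ∈ Finset.Icc (0:ℤ) d, Ws i) = ⊤)
    (B : Module.End 𝕂 V)
    (hB : ∀ i : ℤ, 0 ≤ i → i ≤ d → ∀ v ∈ Ws i, B v = q ^ (2*i - d) • v)
    (i : ℕ) (hi : 1 ≤ i)
    :
    ∀ j : ℕ, 1 ≤ j → j ≤ i →
      (B - K) ^ j * (A - K) ^ i =
        ∑ h ∈ Finset.range (j + 1),
          (q ^ (((h:ℤ) * (3*(h:ℤ) - 1)) / 2 + (h:ℤ)*(j:ℤ) - 3*(h:ℤ)*(i:ℤ) + 2*(i:ℤ)*(j:ℤ)) *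
              (qfac 𝕂 q i / (qfac 𝕂 q h * qfac 𝕂 q (i - h)) * qfac 𝕂 q h * (q - q⁻¹) ^ h) *
              (qfac 𝕂 q j / (qfac 𝕂 q h * qfac 𝕂 q (j - h)))) •
            (((List.range h).map (fun s =>
                K ^ 2 - q ^ (2*(i:ℤ) - 2*(s:ℤ) - 2*(j:ℤ)) • (1 : Module.End 𝕂 V))).prod *
              (A - K) ^ (i - h) * (B - K) ^ (j - h)) := by
  have eigP : ∀ i, ∀ v ∈ Vs i, A v = q ^ (2 * i - d) • v := by
    intro i v hv
    by_cases h : 0 ≤ i ∧ i ≤ d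
    · rw [hVeig i h.1 h.2] at hv
      exact Module.End.mem_eigenspace_iff.mp hv
    · rw [hVout i (by omega), Submodule.mem_bot] at hv
      simp [hv]
  have eigQ : ∀ i, ∀ v ∈ Vst i, Astar v = (q ^ (2 * i - d) + c * q ^ (d - 2 * i)) • v := by
    intro i v hv
    by_cases h : 0 ≤ i ∧ i ≤ d
    · rw [hVsteig i h.1 h.2] at hv
      exact Module.End.mem_eigenspace_iff.mp hv
    · rw [hVstout i (by omega), Submodule.mem_bot] at hv
      simp [hv]
  have D : SplitData A Astar (fun i => q ^ (2 * i - d))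
      (fun i => q ^ (2 * i - d) + c * q ^ (d - 2 * i)) Vs Vst :=
    { eigP := eigP, eigQ := eigQ, triP := htd1, triQ := htd2, irr := hirr
      outQ := fun i hi => hVstout i (Or.inl hi)
      proper := upperSum_ne_top eigP
        (fun i hi h => by have := zpow_inj_of_not_root hq0 hqru h; omega) (hVne 0 le_rfl hd) }
  have eigP' : ∀ i, ∀ v ∈ Vs (d - i), A v = q ^ (d - 2 * i) • v := by
    intro i v hv
    rw [eigP _ v hv]
    congr 2
    ring
  have D' : SplitData A Astar (fun i => q ^ (d - 2 * i))
      (fun i => q ^ (2 * i - d) + c * q ^ (d - 2 * i)) (fun i => Vs (d - i)) Vst :=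
    { eigP := eigP', eigQ := eigQ, triQ := htd2, irr := hirr
      triP := fun i => by
        refine (htd1 (d - i)).trans (le_of_eq ?_)
        rw [show d - i - 1 = d - (i + 1) by ring, show d - i + 1 = d - (i - 1) by ring,
          sup_comm, sup_comm (Vs (d - (i + 1))), sup_assoc]
      outQ := fun i hi => hVstout i (Or.inl hi)
      proper := upperSum_ne_top eigP'
        (fun i hi h => by have := zpow_inj_of_not_root hq0 hqru h; omega)
        (hVne _ (by omega) (by omega)) }
  have hlow : ∀ i : ℤ, (⨆ j ∈ Finset.Icc (0 : ℤ) i, Vst j) = lowerSum Vst i := by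
    intro i
    refine le_antisymm (iSup₂_le fun j hj => le_lowerSum Vst (Finset.mem_Icc.mp hj).2)
      (iSup₂_le fun j hj => ?_)
    by_cases h : 0 ≤ j
    · exact le_iSup₂_of_le j (Finset.mem_Icc.mpr ⟨h, hj⟩) le_rfl
    · rw [hVstout j (by omega)]
      exact bot_le
  have hup : ∀ i : ℤ, (⨆ j ∈ Finset.Icc i d, Vs j) = upperSum Vs i := by
    intro i
    refine le_antisymm (iSup₂_le fun j hj => le_upperSum Vs (Finset.mem_Icc.mp hj).1)
      (iSup₂_le fun j hj => ?_)
    by_cases h : j ≤ d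
    · exact le_iSup₂_of_le j (Finset.mem_Icc.mpr ⟨hj, h⟩) le_rfl
    · rw [hVout j (by omega)]
      exact bot_le
  have hup' : ∀ i : ℤ, (⨆ j ∈ Finset.Icc (0 : ℤ) (d - i), Vs j) =
      upperSum (fun j => Vs (d - j)) i := by
    intro i
    refine le_antisymm (iSup₂_le fun j hj => ?_) (iSup₂_le fun j hj => ?_)
    · have := le_upperSum (fun j => Vs (d - j)) (i := i) (j := d - j)
        (by have := (Finset.mem_Icc.mp hj).2; omega)
      simpa using this
    · change Vs (d - j) ≤ _
      by_cases h : 0 ≤ d - j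
      · exact le_iSup₂_of_le (d - j) (Finset.mem_Icc.mpr ⟨h, by omega⟩) le_rfl
      · rw [hVout (d - j) (by omega)]
        exact bot_le
  have hlowbot : ∀ i : ℤ, i < 0 → lowerSum Vst i = ⊥ := fun i hi =>
    eq_bot_iff.mpr (iSup₂_le fun j hj => (hVstout j (by omega)).le)
  have hU : ∀ i, Us i = lowerSum Vst i ⊓ upperSum Vs i := by
    intro i
    by_cases h : 0 ≤ i ∧ i ≤ d
    · rw [hUdef i h.1 h.2, hlow, hup]
    · rw [hUout i (by omega)]
      rcases lt_or_ge i 0 with hi | hi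
      · rw [hlowbot i hi, bot_inf_eq]
      · have : upperSum Vs i = ⊥ :=
          eq_bot_iff.mpr (iSup₂_le fun j hj => (hVout j (by omega)).le)
        rw [this, inf_bot_eq]
  have hW : ∀ i, Ws i = lowerSum Vst i ⊓ upperSum (fun j => Vs (d - j)) i := by
    intro i
    by_cases h : 0 ≤ i ∧ i ≤ d
    · rw [hWdef i h.1 h.2, hlow, hup']
    · rw [hWout i (by omega)]
      rcases lt_or_ge i 0 with hi | hi
      · rw [hlowbot i hi, bot_inf_eq]
      · have : upperSum (fun j => Vs (d - j)) i = ⊥ :=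
          eq_bot_iff.mpr (iSup₂_le fun j hj => (hVout (d - j) (by omega)).le)
        rw [this, inf_bot_eq]
  have hUtop : (⨆ i, Us i) = ⊤ :=
    eq_top_iff.mpr (hUtot.ge.trans (iSup₂_le fun j _ => le_iSup Us j))
  have hWtop : (⨆ i, Ws i) = ⊤ :=
    eq_top_iff.mpr (hWtot.ge.trans (iSup₂_le fun j _ => le_iSup Ws j))
  have hK' : ∀ i, ∀ v ∈ Us i, K v = q ^ (2 * i - d) • v := by
    intro i v hv
    by_cases h : 0 ≤ i ∧ i ≤ d
    · exact hK i h.1 h.2 v hv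
    · rw [hUout i (by omega), Submodule.mem_bot] at hv
      simp [hv]
  have hY : ∀ i, ∀ v ∈ Us i, Kinv v = q ^ (d - 2 * i) • v := by
    intro i v hv
    by_cases h : 0 ≤ i ∧ i ≤ d
    · exact hKinv i h.1 h.2 v hv
    · rw [hUout i (by omega), Submodule.mem_bot] at hv
      simp [hv]
  have hB' : ∀ i, ∀ v ∈ Ws i, B v = q ^ (2 * i - d) • v := by
    intro i v hv
    by_cases h : 0 ≤ i ∧ i ≤ d
    · exact hB i h.1 h.2 v hv
    · rw [hWout i (by omega), Submodule.mem_bot] at hv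
      simp [hv]
  have hq2 : q ^ 2 ≠ 0 := pow_ne_zero 2 hq0
  have hprog : ∀ i : ℤ, q ^ (2 * (i + 1) - d) = q ^ 2 * q ^ (2 * i - d) := by
    intro i
    rw [← zpow_natCast q 2, ← zpow_add₀ hq0]
    congr 1
    push_cast
    ring
  have hprog' : ∀ i : ℤ, q ^ (d - 2 * (i + 1)) = (q ^ 2)⁻¹ * q ^ (d - 2 * i) := by
    intro i
    rw [← zpow_natCast q 2, ← zpow_neg, ← zpow_add₀ hq0]
    congr 1
    push_cast
    ring
  have hone : ∀ i : ℤ, q ^ (2 * i - d) * q ^ (d - 2 * i) = 1 := by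
    intro i
    rw [← zpow_add₀ hq0]
    simp
  have relK : K * A - q ^ 2 • (A * K) = (1 - q ^ 2) • K ^ 2 :=
    D.comm_rel hU hUtop hprog hK' fun i v hv => by
      rw [pow_two, Module.End.mul_apply, hK' i v hv, map_smul, hK' i v hv, smul_smul]
  have relY : Kinv * A - (q ^ 2)⁻¹ • (A * Kinv) = (1 - (q ^ 2)⁻¹) • (1 : Module.End 𝕂 V) :=
    D.comm_rel hU hUtop hprog' hY fun i v hv => by simp [hone]
  have relB : B * A - q ^ 2 • (A * B) = (1 - q ^ 2) • (1 : Module.End 𝕂 V) :=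
    D'.comm_rel hW hWtop hprog hB' fun i v hv => by simp [mul_comm _ (q ^ (2 * i - d)), hone]
  have relX := equitable_rel hq0 D hU hUtop hY
    (fun i v hv => D'.triangular hW hWtop hB' i hv) hone relY relB
    (fun i => by
      by_cases h : 0 ≤ i ∧ i ≤ d
      · exact Or.inr (hVeig i h.1 h.2)
      · exact Or.inl (hVout i (by omega)))
  have relKB : q ^ 2 • (K * B) - B * K = (q ^ 2 - 1) • K ^ 2 := by
    have h := congrArg (fun Z => q • (K * Z * K)) relX
    simp only [mul_sub, sub_mul, mul_smul_comm, smul_mul_assoc, smul_sub, smul_smul, mul_one] at h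
    rw [mul_assoc K (B * Kinv), mul_assoc B, hKinvK, ← mul_assoc K Kinv, hKKinv, mul_one, one_mul,
      mul_inv_cancel₀ hq0, one_smul, ← pow_two, ← pow_two] at h
    rw [h, sub_smul, one_smul]
  intro j _ hj
  rw [reorder (q := q) hq0 hqru (K := K) ?_ ?_ ?_ i j hj]
  · refine Finset.sum_congr rfl fun h hh => ?_
    have hh' : h ≤ j := by simpa [Nat.lt_succ_iff] using hh
    have hf := qfac_ne hq0 hqru h
    congr 1
    · rw [qbin, if_pos hh', expM]
      congr 2
      field_simp
    · unfold fprod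
      -- The index `s` is an integer in the product on the right, which runs over the list obtained
      -- from `List.range h` by casting.
      have hl : (do let a ← List.range h; pure (a : ℤ)) =
          (List.range h).map (fun a : ℕ => (a : ℤ)) :=
        List.flatMap_pure_eq_map _ _
      rw [hl, List.map_map]
      congr 3
      refine List.map_congr_left fun s _ => ?_
      simp only [Function.comp_apply]
      congr 3
      ring
  · have h := sub_eq_iff_eq_add.mp relK
    rw [mul_sub, sub_mul, h, pow_two K]
    module
  · have h := sub_eq_iff_eq_add.mp relKB
    rw [mul_sub, sub_mul, smul_sub, h, pow_two K]
    module
  · have h4 : (B - K) * (A - K) - q ^ 2 • ((A - K) * (B - K)) =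
        (B * A - q ^ 2 • (A * B)) - (K * A - q ^ 2 • (A * K)) +
          (q ^ 2 • (K * B) - B * K) - (q ^ 2 - 1) • K ^ 2 := by
      rw [pow_two K]
      simp only [mul_sub, sub_mul]
      module
    rw [relB, relK, relKB] at h4
    rw [sub_eq_iff_eq_add.mp h4]
    module
end
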